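/- arXiv:2009.00843 — 3 statements merged into one kernel-verified Lean document; each statement's English description precedes it below -/
import Mathlib

section
/- Every fullerene graph has girth 5. -/
/-- A combinatorial description of a fullerene: a connected cubic plane graph
all of whose faces have size `5` or `6`. A plane embedding is recorded by its
collection `F` of faces, each face given as the edge set of a cycle of `G`;
every edge lies on exactly two faces, and Euler's formula holds. -/
structure IsFullerene {V : Type*} [Fintype V] [DecidableEq V]
    (G : SimpleGraph V) [DecidableRel G.Adj] (F : Finset (Finset (Sym2 V))) : Prop where
  connected : G.Connected
  cubic : ∀ v : V, G.degree v = 3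
  face_cycle : ∀ f ∈ F, ∃ (v : V) (w : G.Walk v v), w.IsCycle ∧ w.edges.toFinset = f
  face_size : ∀ f ∈ F, f.card = 5 ∨ f.card = 6
  edge_faces : ∀ e ∈ G.edgeFinset, (F.filter (fun f => e ∈ f)).card = 2
  euler : (Fintype.card V : ℤ) - G.edgeFinset.card + F.card = 2

/-! By Euler's formula the cellular chain complex of the faces, taken modulo `2`, is exact at the
edges. Hence every cycle of the graph separates the faces into two sides, and two faces sharing an
edge lie on different sides exactly when that edge belongs to the cycle.

The three faces that turn at the corners of a triangle cannot alternate between two sides, so two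
of them coincide, and this face contains the triangle; since faces are longer, there are no
triangles. Around a 4-cycle, either one face turns at two consecutive corners, or the faces turning
at opposite corners share the two outer edges at the other two corners. In both cases these faces
are hexagons, since a pentagon would create a triangle or make two faces turn at the same corner,
and they produce a 4-cycle through a neighbour of the given one. So if there is a 4-cycle, then the
4-cycles spread over the whole connected graph and every face is a hexagon. But Euler's formula
gives `∑ f ∈ F, (6 - #f) = 12`, so some face is a pentagon: there are no 4-cycles, and the girth is
attained. -/

open SimpleGraph Finset

section LinearAlgebra

variable {K : Type*} [Field K]

theorem exists_mulVec_eq_of_mulVec_eq_zero {m n l : Type*} [Fintype m] [Fintype n] [Fintype l]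
    {A : Matrix m n K} {B : Matrix n l K} (hAB : A * B = 0)
    (hA : Module.finrank K (LinearMap.ker A.transpose.mulVecLin) ≤ 1)
    (hB : Module.finrank K (LinearMap.ker B.mulVecLin) ≤ 1)
    (hcard : Fintype.card n + 2 ≤ Fintype.card m + Fintype.card l)
    {c : n → K} (hc : A.mulVec c = 0) : ∃ s, B.mulVec s = c := by
  have hle : LinearMap.range B.mulVecLin ≤ LinearMap.ker A.mulVecLin := by
    rintro _ ⟨x, rfl⟩
    simp [Matrix.mulVec_mulVec, hAB]
  have hdim : Module.finrank K (LinearMap.ker A.mulVecLin) ≤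
      Module.finrank K (LinearMap.range B.mulVecLin) := by
    have hrank : Module.finrank K (LinearMap.range A.transpose.mulVecLin) =
        Module.finrank K (LinearMap.range A.mulVecLin) := A.rank_transpose
    have hnullA := A.mulVecLin.finrank_range_add_finrank_ker
    have hnullAT := A.transpose.mulVecLin.finrank_range_add_finrank_ker
    have hnullB := B.mulVecLin.finrank_range_add_finrank_ker
    simp only [Module.finrank_fintype_fun_eq_card] at hnullA hnullAT hnullB
    omega
  have hmem : c ∈ LinearMap.range B.mulVecLin := by
    rw [Submodule.eq_of_le_of_finrank_le hle hdim]
    simpa using hc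
  simpa using hmem

theorem finrank_le_one_of_forall_eq {ι : Type*} [Finite ι] {W : Submodule K (ι → K)}
    (hW : ∀ w ∈ W, ∀ i j, w i = w j) : Module.finrank K W ≤ 1 := by
  have hle : W ≤ Submodule.span K {1} := by
    intro w hw
    rw [Submodule.mem_span_singleton]
    rcases isEmpty_or_nonempty ι with _ | ⟨⟨i⟩⟩
    · exact ⟨0, Subsingleton.elim _ _⟩
    · exact ⟨w i, funext fun j => by simp [hW w hw i j]⟩
  calc Module.finrank K W ≤ Module.finrank K (Submodule.span K {(1 : ι → K)}) :=
        Submodule.finrank_mono hle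
    _ ≤ 1 := by simpa using finrank_span_le_card (R := K) ({1} : Set (ι → K))

end LinearAlgebra

section Neighbors

variable {V : Type*} {G : SimpleGraph V} {v a b c d : V}

theorem eq_of_forall_adj_eq {α : Type*} (hG : G.Preconnected) {φ : V → α}
    (hφ : ∀ v w, G.Adj v w → φ v = φ w) (v w : V) : φ v = φ w := by
  obtain ⟨p⟩ := hG v w
  induction p with
  | nil => rfl
  | cons h _ ih => rw [hφ _ _ h, ih]

theorem exists_adj_ne_ne [Fintype (G.neighborSet v)] (hv : G.degree v = 3) (a b : V) :
    ∃ c, G.Adj v c ∧ c ≠ a ∧ c ≠ b := by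
  classical
  have hlt : #({a, b} : Finset V) < #(G.neighborFinset v) := by
    rw [card_neighborFinset_eq_degree, hv]
    exact card_le_two.trans_lt (by norm_num)
  obtain ⟨c, hc, hcab⟩ := exists_mem_notMem_of_card_lt_card hlt
  simp only [mem_insert, mem_singleton, not_or] at hcab
  exact ⟨c, by simpa using hc, hcab⟩

theorem eq_or_eq_or_eq_of_adj [Fintype (G.neighborSet v)] (hv : G.degree v = 3)
    (ha : G.Adj v a) (hb : G.Adj v b) (hc : G.Adj v c) (hab : a ≠ b) (hac : a ≠ c) (hbc : b ≠ c)
    (hd : G.Adj v d) : d = a ∨ d = b ∨ d = c := by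
  classical
  have hsub : {a, b, c} ⊆ G.neighborFinset v := by
    simp [insert_subset_iff, ha, hb, hc]
  have hcard : #(G.neighborFinset v) ≤ #{a, b, c} := by
    rw [card_neighborFinset_eq_degree, hv, card_eq_three.2 ⟨a, b, c, hab, hac, hbc, rfl⟩]
  have hmem : d ∈ ({a, b, c} : Finset V) := by
    rw [eq_of_subset_of_card_le hsub hcard]
    simpa using hd
  simpa using hmem

theorem eq_of_adj_of_ne_of_ne [Fintype (G.neighborSet v)] (hv : G.degree v = 3)
    (ha : G.Adj v a) (hb : G.Adj v b) (hab : a ≠ b) (hc : G.Adj v c) (hca : c ≠ a) (hcb : c ≠ b)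
    (hd : G.Adj v d) (hda : d ≠ a) (hdb : d ≠ b) : d = c := by
  rcases eq_or_eq_or_eq_of_adj hv ha hb hc hab hca.symm hcb.symm hd with h | h | h
  exacts [absurd h hda, absurd h hdb, h]

end Neighbors

section Cycles

variable {V : Type*} {G : SimpleGraph V} {C f : Finset (Sym2 V)} {v a b c d e : V}

/-- `HasCorner f a v b` says that `va` and `vb` are two different edges of `f`; for a face `f`
this means that `f` turns from `a` to `b` at the vertex `v`. -/
structure HasCorner (f : Finset (Sym2 V)) (a v b : V) : Prop where
  left : s(v, a) ∈ f
  right : s(v, b) ∈ f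
  ne : a ≠ b

theorem HasCorner.symm (h : HasCorner f a v b) : HasCorner f b v a :=
  ⟨h.right, h.left, h.ne.symm⟩

/-- `HasPath f a b c d e` says that `f` runs through `a, b, c, d, e` in this order. This
leaves no vertex of a pentagon and only one vertex of a hexagon undetermined. -/
structure HasPath (f : Finset (Sym2 V)) (a b c d e : V) : Prop where
  corner₁ : HasCorner f a b c
  corner₂ : HasCorner f b c d
  corner₃ : HasCorner f c d e

variable [DecidableEq V]

/-- `IsCycleEdgeSet G f` says that `f` is the edge set of a cycle of `G`. Cycles and faces are
handled through their edge sets because this is how `IsFullerene` records faces. -/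
def IsCycleEdgeSet (G : SimpleGraph V) (f : Finset (Sym2 V)) : Prop :=
  ∃ (v : V) (w : G.Walk v v), w.IsCycle ∧ w.edges.toFinset = f

namespace IsCycleEdgeSet

theorem adj (hf : IsCycleEdgeSet G f) (hab : s(a, b) ∈ f) : G.Adj a b := by
  obtain ⟨v, w, -, rfl⟩ := hf
  exact w.adj_of_mem_edges (by simpa using hab)

theorem subset_edgeFinset [Fintype G.edgeSet] (hf : IsCycleEdgeSet G f) : f ⊆ G.edgeFinset := by
  rintro ⟨a, b⟩ hab
  simpa using hf.adj hab

theorem exists_mem (hf : IsCycleEdgeSet G f) : ∃ a b, s(a, b) ∈ f := by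
  obtain ⟨v, w, hw, rfl⟩ := hf
  cases w with
  | nil => exact absurd rfl hw.ne_nil
  | @cons _ u _ h p => exact ⟨v, u, by simp⟩

theorem exists_ne_forall_mem_iff (hf : IsCycleEdgeSet G f) (ha : s(v, a) ∈ f) :
    ∃ b, a ≠ b ∧ ∀ c, s(v, c) ∈ f ↔ c = a ∨ c = b := by
  obtain ⟨x, w, hw, rfl⟩ := hf
  simp only [List.mem_toFinset] at ha ⊢
  obtain ⟨p, q, hpq, hnbr⟩ := Set.ncard_eq_two.1
    (hw.ncard_neighborSet_toSubgraph_eq_two (w.fst_mem_support_of_mem_edges ha))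
  have hmem (c : V) : s(v, c) ∈ w.edges ↔ c = p ∨ c = q := by
    rw [← Walk.adj_toSubgraph_iff_mem_edges, ← Subgraph.mem_neighborSet, hnbr]
    simp
  rcases (hmem a).1 ha with rfl | rfl
  · exact ⟨q, hpq, hmem⟩
  · exact ⟨p, hpq.symm, fun c => (hmem c).trans or_comm⟩

theorem exists_hasCorner (hf : IsCycleEdgeSet G f) (ha : s(v, a) ∈ f) : ∃ b, HasCorner f a v b := by
  obtain ⟨b, hab, hmem⟩ := hf.exists_ne_forall_mem_iff ha
  exact ⟨b, ha, (hmem b).2 (Or.inr rfl), hab⟩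

theorem eq_or_eq_of_hasCorner (hf : IsCycleEdgeSet G f) (hab : HasCorner f a v b)
    (hc : s(v, c) ∈ f) : c = a ∨ c = b := by
  obtain ⟨d, -, hmem⟩ := hf.exists_ne_forall_mem_iff hab.left
  have := hab.ne
  grind [hab.right]

theorem even_card_filter_mem (hf : IsCycleEdgeSet G f) (v : V) : Even #{e ∈ f | v ∈ e} := by
  by_cases hv : ∃ a, s(v, a) ∈ f
  · obtain ⟨a, ha⟩ := hv
    obtain ⟨b, hab, hmem⟩ := hf.exists_ne_forall_mem_iff ha
    have hpair : {e ∈ f | v ∈ e} = {s(v, a), s(v, b)} := by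
      ext e
      simp only [mem_filter, mem_insert, mem_singleton]
      constructor
      · rintro ⟨he, c, rfl⟩
        rcases (hmem c).1 he with rfl | rfl <;> simp
      · rintro (rfl | rfl) <;> simp [hmem]
    rw [hpair, card_pair (Sym2.congr_right.not.2 hab)]
    exact even_two
  · have hempty : {e ∈ f | v ∈ e} = ∅ := by
      rw [filter_eq_empty_iff]
      rintro _ he ⟨c, rfl⟩
      exact hv ⟨c, he⟩
    simp [hempty]

theorem exists_isCycle_snd_eq (hf : IsCycleEdgeSet G f) (hab : s(a, b) ∈ f) :
    ∃ c : G.Walk a a, c.IsCycle ∧ c.snd = b ∧ c.edges.toFinset = f := by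
  obtain ⟨v, w, hw, rfl⟩ := hf
  rw [List.mem_toFinset] at hab
  have ha := w.fst_mem_support_of_mem_edges hab
  have hc := hw.rotate ha
  have hedges := (w.rotate_edges a ha).perm
  have hb : b ∈ (w.rotate a ha).toSubgraph.neighborSet a := by
    rw [Subgraph.mem_neighborSet, Walk.adj_toSubgraph_iff_mem_edges]
    exact hedges.mem_iff.2 hab
  rw [← List.toFinset_eq_of_perm _ _ hedges]
  rw [hc.neighborSet_toSubgraph_endpoint] at hb
  rcases hb with hb | hb
  · exact ⟨_, hc, hb.symm, rfl⟩
  · exact ⟨_, hc.reverse, (Walk.snd_reverse _).trans hb.symm, by simp⟩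

theorem exists_isPath (hf : IsCycleEdgeSet G f) (hab : s(a, b) ∈ f) :
    ∃ p : G.Walk b a, p.IsPath ∧ #f = p.length + 1 ∧ ∀ e, e ∈ f ↔ e = s(a, b) ∨ e ∈ p.edges := by
  obtain ⟨c, hc, rfl, rfl⟩ := hf.exists_isCycle_snd_eq hab
  rw [List.toFinset_card_of_nodup hc.edges_nodup]
  have hcons := c.cons_tail_eq hc.not_nil
  refine ⟨c.tail, hc.isPath_tail, ?_, fun e => ?_⟩
  · rw [c.length_tail_add_one hc.not_nil, Walk.length_edges]
  · rw [List.mem_toFinset, ← hcons]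
    simp

theorem eq_of_subset (hC : IsCycleEdgeSet G C) (hf : IsCycleEdgeSet G f) (hCf : C ⊆ f) :
    C = f := by
  have hclosed {x y z : V} (hxy : s(x, y) ∈ C) (hxz : s(x, z) ∈ f) : s(x, z) ∈ C := by
    obtain ⟨b, hb⟩ := hC.exists_hasCorner hxy
    rcases hf.eq_or_eq_of_hasCorner ⟨hCf hb.left, hCf hb.right, hb.ne⟩ hxz with rfl | rfl
    exacts [hb.left, hb.right]
  have hwalk {x y z : V} (p : G.Walk x y) (hp : ∀ e ∈ p.edges, e ∈ f) (hz : s(x, z) ∈ C) :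
      ∀ e ∈ p.edges, e ∈ C := by
    induction p generalizing z with
    | nil => simp
    | @cons x u y _ p ih =>
      have hxu : s(x, u) ∈ C := hclosed hz (hp _ (by simp))
      have hp' := ih (fun e he => hp e (by simp [he])) (Sym2.eq_swap ▸ hxu)
      simpa [hxu] using hp'
  obtain ⟨a, b, hab⟩ := hC.exists_mem
  obtain ⟨p, -, -, hp⟩ := hf.exists_isPath (hCf hab)
  refine hCf.antisymm fun e he => ?_
  rcases (hp e).1 he with rfl | he
  · exact hab
  · exact hwalk p (fun e he => (hp e).2 (Or.inr he)) (Sym2.eq_swap ▸ hab) e he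

theorem not_subset_of_card_lt (hC : IsCycleEdgeSet G C) (hf : IsCycleEdgeSet G f)
    (hlt : #C < #f) : ¬C ⊆ f :=
  fun hCf => hlt.ne (congrArg card (hC.eq_of_subset hf hCf))

theorem nodup_and_mem_of_card_eq_five (hf : IsCycleEdgeSet G f) (hcard : #f = 5)
    (hpath : HasPath f a b c d e) : [a, b, c, d, e].Nodup ∧ s(e, a) ∈ f := by
  obtain ⟨p, hp, hlen, hmem⟩ := hf.exists_isPath (Sym2.eq_swap ▸ hpath.corner₁.left : s(a, b) ∈ f)
  obtain ⟨⟨hba, hbc, hac⟩, ⟨-, hcd, hbd⟩, ⟨-, hde, hce⟩⟩ := hpath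
  match p with
  | .cons _ (.cons _ (.cons _ (.cons _ .nil))) =>
    simp only [Walk.isPath_def, Walk.support_cons, Walk.support_nil] at hp
    simp only [hmem, Walk.edges_cons, Walk.edges_nil, List.mem_cons, List.not_mem_nil, or_false,
      Sym2.eq_iff] at *
    grind
  | .nil | .cons _ .nil | .cons _ (.cons _ .nil) | .cons _ (.cons _ (.cons _ .nil))
  | .cons _ (.cons _ (.cons _ (.cons _ (.cons _ _)))) => grind [Walk.length_cons, Walk.length_nil]

theorem nodup_and_exists_of_card_eq_six (hf : IsCycleEdgeSet G f) (hcard : #f = 6)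
    (hpath : HasPath f a b c d e) : ∃ x, [a, b, c, d, e, x].Nodup ∧ s(e, x) ∈ f ∧ s(x, a) ∈ f := by
  obtain ⟨p, hp, hlen, hmem⟩ := hf.exists_isPath (Sym2.eq_swap ▸ hpath.corner₁.left : s(a, b) ∈ f)
  obtain ⟨⟨hba, hbc, hac⟩, ⟨-, hcd, hbd⟩, ⟨-, hde, hce⟩⟩ := hpath
  match p with
  | .cons _ (.cons _ (.cons _ (.cons _ (.cons (u := x) _ .nil)))) =>
    refine ⟨x, ?_⟩
    simp only [Walk.isPath_def, Walk.support_cons, Walk.support_nil] at hp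
    simp only [hmem, Walk.edges_cons, Walk.edges_nil, List.mem_cons, List.not_mem_nil, or_false,
      Sym2.eq_iff] at *
    grind
  | .nil | .cons _ .nil | .cons _ (.cons _ .nil) | .cons _ (.cons _ (.cons _ .nil))
  | .cons _ (.cons _ (.cons _ (.cons _ .nil)))
  | .cons _ (.cons _ (.cons _ (.cons _ (.cons _ (.cons _ _))))) =>
    grind [Walk.length_cons, Walk.length_nil]

end IsCycleEdgeSet

end Cycles

section DoubleCover

variable {V : Type*} [DecidableEq V] {G : SimpleGraph V} [Fintype G.edgeSet]
  {F : Finset (Finset (Sym2 V))} {f g k : Finset (Sym2 V)} {e : Sym2 V} {v a b c : V}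

/-- A cycle double cover of `G`: a collection of cycles, given by their edge sets, that covers
every edge exactly twice. The faces of a plane graph without bridges form one. -/
structure IsCycleDoubleCover (G : SimpleGraph V) [Fintype G.edgeSet]
    (F : Finset (Finset (Sym2 V))) : Prop where
  isCycleEdgeSet : ∀ f ∈ F, IsCycleEdgeSet G f
  card_filter_mem : ∀ e ∈ G.edgeFinset, #{f ∈ F | e ∈ f} = 2

namespace IsCycleDoubleCover

theorem filter_mem_eq_pair (hF : IsCycleDoubleCover G F) (hf : f ∈ F) (hg : g ∈ F) (hfg : f ≠ g)
    (hef : e ∈ f) (heg : e ∈ g) : {k ∈ F | e ∈ k} = {f, g} := by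
  have he := (hF.isCycleEdgeSet f hf).subset_edgeFinset hef
  refine (eq_of_subset_of_card_le ?_ ?_).symm
  · simp [insert_subset_iff, hf, hg, hef, heg]
  · rw [hF.card_filter_mem e he, card_pair hfg]

theorem eq_or_eq_of_mem (hF : IsCycleDoubleCover G F) (hf : f ∈ F) (hg : g ∈ F) (hfg : f ≠ g)
    (hef : e ∈ f) (heg : e ∈ g) (hk : k ∈ F) (hek : e ∈ k) : k = f ∨ k = g := by
  have hmem : k ∈ {k ∈ F | e ∈ k} := mem_filter.2 ⟨hk, hek⟩
  simpa [hF.filter_mem_eq_pair hf hg hfg hef heg] using hmem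

theorem exists_mem (hF : IsCycleDoubleCover G F) (he : e ∈ G.edgeSet) : ∃ f ∈ F, e ∈ f := by
  have hpos : 0 < #{f ∈ F | e ∈ f} := by
    rw [hF.card_filter_mem e (by simpa using he)]
    exact two_pos
  simpa [Finset.Nonempty] using card_pos.1 hpos

theorem card_corner_add_card_corner [Fintype (G.neighborSet v)] (hF : IsCycleDoubleCover G F)
    (hv : G.degree v = 3) (ha : G.Adj v a) (hb : G.Adj v b) (hc : G.Adj v c)
    (hab : a ≠ b) (hac : a ≠ c) (hbc : b ≠ c) :
    #{f ∈ F | s(v, a) ∈ f ∧ s(v, b) ∈ f} + #{f ∈ F | s(v, a) ∈ f ∧ s(v, c) ∈ f} = 2 := by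
  rw [← hF.card_filter_mem s(v, a) (by simpa using ha), ← card_union_of_disjoint]
  · congr 1
    ext f
    simp only [mem_union, mem_filter]
    refine ⟨by tauto, fun ⟨hf, haf⟩ => ?_⟩
    obtain ⟨d, hd⟩ := (hF.isCycleEdgeSet f hf).exists_hasCorner haf
    rcases eq_or_eq_or_eq_of_adj hv ha hb hc hab hac hbc
      ((hF.isCycleEdgeSet f hf).adj hd.right) with rfl | rfl | rfl
    · exact absurd rfl hd.ne
    · exact Or.inl ⟨hf, haf, hd.right⟩
    · exact Or.inr ⟨hf, haf, hd.right⟩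
  · refine disjoint_filter.2 fun f hf ⟨haf, hbf⟩ ⟨_, hcf⟩ => ?_
    rcases (hF.isCycleEdgeSet f hf).eq_or_eq_of_hasCorner ⟨haf, hbf, hab⟩ hcf with h | h
    exacts [hac h.symm, hbc h.symm]

theorem card_corner_eq_one [Fintype (G.neighborSet v)] (hF : IsCycleDoubleCover G F)
    (hv : G.degree v = 3) (ha : G.Adj v a) (hb : G.Adj v b) (hab : a ≠ b) :
    #{f ∈ F | s(v, a) ∈ f ∧ s(v, b) ∈ f} = 1 := by
  obtain ⟨c, hc, hca, hcb⟩ := exists_adj_ne_ne hv a b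
  have hA := hF.card_corner_add_card_corner hv ha hb hc hab hca.symm hcb.symm
  have hB := hF.card_corner_add_card_corner hv hb ha hc hab.symm hcb.symm hca.symm
  have hC := hF.card_corner_add_card_corner hv hc ha hb hca hcb hab
  have hcomm (x y : V) : #{f ∈ F | s(v, x) ∈ f ∧ s(v, y) ∈ f} =
      #{f ∈ F | s(v, y) ∈ f ∧ s(v, x) ∈ f} := by
    simp only [and_comm]
  rw [hcomm b a] at hB
  rw [hcomm c a, hcomm c b] at hC
  omega

theorem exists_hasCorner [Fintype (G.neighborSet v)] (hF : IsCycleDoubleCover G F)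
    (hv : G.degree v = 3) (ha : G.Adj v a) (hb : G.Adj v b) (hab : a ≠ b) :
    ∃ f ∈ F, HasCorner f a v b := by
  obtain ⟨f, hf⟩ := card_eq_one.1 (hF.card_corner_eq_one hv ha hb hab)
  have hmem : f ∈ {f ∈ F | s(v, a) ∈ f ∧ s(v, b) ∈ f} := hf ▸ mem_singleton_self f
  obtain ⟨hfF, hfa, hfb⟩ := mem_filter.1 hmem
  exact ⟨f, hfF, hfa, hfb, hab⟩

theorem eq_of_hasCorner [Fintype (G.neighborSet v)] (hF : IsCycleDoubleCover G F)
    (hv : G.degree v = 3) (hf : f ∈ F) (hg : g ∈ F) (hfc : HasCorner f a v b)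
    (hgc : HasCorner g a v b) : f = g := by
  have hadj {x : V} : s(v, x) ∈ f → G.Adj v x := (hF.isCycleEdgeSet f hf).adj
  have hcard := hF.card_corner_eq_one hv (hadj hfc.left) (hadj hfc.right) hfc.ne
  exact card_le_one.1 hcard.le f (by simp [hf, hfc.left, hfc.right])
    g (by simp [hg, hgc.left, hgc.right])

/-- Two faces sharing an edge turn in opposite directions at its ends. -/
theorem hasCorner_of_mem_of_ne [Fintype (G.neighborSet v)] (hF : IsCycleDoubleCover G F)
    (hv : G.degree v = 3) (hf : f ∈ F) (hg : g ∈ F) (hfg : f ≠ g) (hgc : HasCorner g a v b)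
    (hc : G.Adj v c) (hca : c ≠ a) (hcb : c ≠ b) (haf : s(v, a) ∈ f) : HasCorner f a v c := by
  obtain ⟨d, hd⟩ := (hF.isCycleEdgeSet f hf).exists_hasCorner haf
  have hadj {x : V} : s(v, x) ∈ g → G.Adj v x := (hF.isCycleEdgeSet g hg).adj
  rcases eq_or_eq_or_eq_of_adj hv (hadj hgc.left) (hadj hgc.right) hc hgc.ne hca.symm hcb.symm
    ((hF.isCycleEdgeSet f hf).adj hd.right) with rfl | rfl | rfl
  · exact absurd rfl hd.ne
  · exact absurd (hF.eq_of_hasCorner hv hf hg hd hgc) hfg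
  · exact hd

theorem eq_of_forall_mem_mem_eq [LocallyFinite G] {α : Type*} (hF : IsCycleDoubleCover G F)
    (hG : G.Preconnected) (hdeg : G.IsRegularOfDegree 3) {φ : Finset (Sym2 V) → α}
    (hφ : ∀ f ∈ F, ∀ g ∈ F, ∀ e ∈ f, e ∈ g → φ f = φ g) (hf : f ∈ F) (hg : g ∈ F) :
    φ f = φ g := by
  have hvertex (v a b : V) (f g) (hf : f ∈ F) (hg : g ∈ F) (hva : s(v, a) ∈ f)
      (hvb : s(v, b) ∈ g) : φ f = φ g := by
    by_cases hab : a = b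
    · exact hφ f hf g hg _ hva (hab ▸ hvb)
    · obtain ⟨k, hk, hcorner⟩ := hF.exists_hasCorner (hdeg v)
        ((hF.isCycleEdgeSet f hf).adj hva) ((hF.isCycleEdgeSet g hg).adj hvb) hab
      exact (hφ f hf k hk _ hva hcorner.left).trans (hφ k hk g hg _ hcorner.right hvb)
  have hface (v : V) : ∃ f ∈ F, ∃ a, s(v, a) ∈ f := by
    obtain ⟨a, ha, -⟩ := exists_adj_ne_ne (hdeg v) v v
    obtain ⟨f, hf, hva⟩ := hF.exists_mem (e := s(v, a)) ha
    exact ⟨f, hf, a, hva⟩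
  choose face hface_mem nbr hnbr using hface
  obtain ⟨x, y, hxy⟩ := (hF.isCycleEdgeSet f hf).exists_mem
  obtain ⟨z, w, hzw⟩ := (hF.isCycleEdgeSet g hg).exists_mem
  calc φ f = φ (face x) := hvertex x y _ f _ hf (hface_mem x) hxy (hnbr x)
    _ = φ (face z) := eq_of_forall_adj_eq hG (φ := φ ∘ face) (fun u u' huu' => by
        obtain ⟨k, hk, hkuu'⟩ := hF.exists_mem (e := s(u, u')) huu'
        exact (hvertex u _ _ _ k (hface_mem u) hk (hnbr u) hkuu').trans
          (hvertex u' _ _ k _ hk (hface_mem u') (Sym2.eq_swap ▸ hkuu') (hnbr u'))) x z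
    _ = φ g := hvertex z _ _ _ g (hface_mem z) hg (hnbr z) hzw

theorem sum_card (hF : IsCycleDoubleCover G F) : ∑ f ∈ F, #f = 2 * #G.edgeFinset := by
  calc ∑ f ∈ F, #f = ∑ f ∈ F, #(G.edgeFinset ∩ f) := sum_congr rfl fun f hf => by
        rw [inter_eq_right.2 (hF.isCycleEdgeSet f hf).subset_edgeFinset]
    _ = #G.edgeFinset * 2 := sum_card_inter hF.card_filter_mem
    _ = 2 * #G.edgeFinset := mul_comm _ _

end IsCycleDoubleCover

end DoubleCover

section CubicPlane

variable {V : Type*} [Fintype V] [DecidableEq V] {G : SimpleGraph V} [DecidableRel G.Adj]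
  {F : Finset (Finset (Sym2 V))} {C : Finset (Sym2 V)} {e : Sym2 V} {a b : V}

/-- `IsCubicPlane G F` says that `G` is a connected cubic plane graph with set of faces `F`. It is
`IsFullerene` without the condition on the face sizes. -/
structure IsCubicPlane (G : SimpleGraph V) [DecidableRel G.Adj]
    (F : Finset (Finset (Sym2 V))) : Prop extends IsCycleDoubleCover G F where
  connected : G.Connected
  cubic : G.IsRegularOfDegree 3
  euler : (Fintype.card V : ℤ) - #G.edgeFinset + #F = 2

theorem IsFullerene.isCubicPlane (hG : IsFullerene G F) : IsCubicPlane G F where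
  isCycleEdgeSet := hG.face_cycle
  card_filter_mem := hG.edge_faces
  connected := hG.connected
  cubic := hG.cubic
  euler := hG.euler

/-- The vertex-edge incidence matrix modulo `2`. Columns are indexed by `G.edgeFinset` because
the rank-nullity count of `IsCubicPlane.exists_sides` concerns the edges only, unlike
`SimpleGraph.incMatrix`, whose columns are indexed by all of `Sym2 V`. -/
def vertexEdgeMatrix (G : SimpleGraph V) [DecidableRel G.Adj] : Matrix V G.edgeFinset (ZMod 2) :=
  Matrix.of fun v e => if v ∈ e.1 then 1 else 0

/-- The edge-face incidence matrix modulo `2`: together with `vertexEdgeMatrix` it forms the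
cellular chain complex of the sphere with coefficients in `ZMod 2`. -/
def edgeFaceMatrix (G : SimpleGraph V) [DecidableRel G.Adj] (F : Finset (Finset (Sym2 V))) :
    Matrix G.edgeFinset F (ZMod 2) :=
  Matrix.of fun e f => if e.1 ∈ f.1 then 1 else 0

theorem vertexEdgeMatrix_mulVec_indicator (hC : C ⊆ G.edgeFinset) (v : V) :
    (vertexEdgeMatrix G).mulVec (fun e => if e.1 ∈ C then 1 else 0) v =
      (#{e ∈ C | v ∈ e} : ZMod 2) := by
  simp only [Matrix.mulVec, dotProduct, vertexEdgeMatrix, Matrix.of_apply]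
  rw [sum_coe_sort G.edgeFinset
    (fun e => (if v ∈ e then (1 : ZMod 2) else 0) * (if e ∈ C then 1 else 0))]
  simp only [mul_ite, mul_one, mul_zero]
  rw [← sum_filter, filter_mem_eq_inter, inter_eq_right.2 hC, sum_boole]

theorem vertexEdgeMatrix_mulVec_indicator_eq_zero (hC : C ⊆ G.edgeFinset)
    (heven : ∀ v, Even #{e ∈ C | v ∈ e}) :
    (vertexEdgeMatrix G).mulVec (fun e => if e.1 ∈ C then 1 else 0) = 0 := by
  ext v
  rw [vertexEdgeMatrix_mulVec_indicator hC, Pi.zero_apply, ZMod.natCast_eq_zero_iff_even]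
  exact heven v

theorem vertexEdgeMatrix_transpose_mulVec (x : V → ZMod 2) (h : G.Adj a b) :
    (vertexEdgeMatrix G).transpose.mulVec x ⟨s(a, b), by simpa using h⟩ = x a + x b := by
  have hends : {v ∈ (univ : Finset V) | v ∈ s(a, b)} = {a, b} := by ext; simp
  simp only [Matrix.mulVec, dotProduct, vertexEdgeMatrix, Matrix.transpose_apply,
    Matrix.of_apply, ite_mul, one_mul, zero_mul]
  rw [← sum_filter, hends, sum_pair h.ne]

theorem IsCycleDoubleCover.edgeFaceMatrix_mulVec (hF : IsCycleDoubleCover G F)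
    (s : F → ZMod 2) (f g : F) (hfg : f ≠ g) (hef : e ∈ f.1) (heg : e ∈ g.1)
    (he : e ∈ G.edgeFinset) : (edgeFaceMatrix G F).mulVec s ⟨e, he⟩ = s f + s g := by
  have hfaces : {k ∈ (univ : Finset F) | e ∈ k.1} = {f, g} := by
    ext k
    have hk := Finset.ext_iff.1
      (hF.filter_mem_eq_pair f.2 g.2 (Subtype.coe_ne_coe.2 hfg) hef heg) k.1
    simpa [Subtype.coe_inj] using hk
  simp only [Matrix.mulVec, dotProduct, edgeFaceMatrix, Matrix.of_apply, ite_mul, one_mul,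
    zero_mul]
  rw [← sum_filter, hfaces, sum_pair hfg]

theorem IsCycleDoubleCover.vertexEdgeMatrix_mul_edgeFaceMatrix (hF : IsCycleDoubleCover G F) :
    vertexEdgeMatrix G * edgeFaceMatrix G F = 0 := by
  ext v f
  have hf := hF.isCycleEdgeSet f f.2
  exact congrFun (vertexEdgeMatrix_mulVec_indicator_eq_zero hf.subset_edgeFinset
    hf.even_card_filter_mem) v

theorem finrank_ker_vertexEdgeMatrix_transpose_le_one (hG : G.Preconnected) :
    Module.finrank (ZMod 2) (LinearMap.ker (vertexEdgeMatrix G).transpose.mulVecLin) ≤ 1 := by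
  refine finrank_le_one_of_forall_eq fun x hx => eq_of_forall_adj_eq hG fun v w hvw => ?_
  rw [LinearMap.mem_ker, Matrix.mulVecLin_apply] at hx
  rw [← CharTwo.add_eq_zero, ← vertexEdgeMatrix_transpose_mulVec x hvw, hx, Pi.zero_apply]

theorem IsCycleDoubleCover.finrank_ker_edgeFaceMatrix_le_one (hF : IsCycleDoubleCover G F)
    (hG : G.Preconnected) (hdeg : G.IsRegularOfDegree 3) :
    Module.finrank (ZMod 2) (LinearMap.ker (edgeFaceMatrix G F).mulVecLin) ≤ 1 := by
  refine finrank_le_one_of_forall_eq fun s hs f g => ?_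
  rw [LinearMap.mem_ker, Matrix.mulVecLin_apply] at hs
  have hshare : ∀ f g : F, ∀ e ∈ f.1, e ∈ g.1 → s f = s g := by
    intro f g e hef heg
    by_cases hfg : f = g
    · rw [hfg]
    · have he := (hF.isCycleEdgeSet f f.2).subset_edgeFinset hef
      rw [← CharTwo.add_eq_zero, ← hF.edgeFaceMatrix_mulVec s f g hfg hef heg he, hs,
        Pi.zero_apply]
  have hconst := hF.eq_of_forall_mem_mem_eq hG hdeg
    (φ := fun k => if hk : k ∈ F then s ⟨k, hk⟩ else 0)
    (fun f hf g hg e hef heg => by simpa [hf, hg] using hshare ⟨f, hf⟩ ⟨g, hg⟩ e hef heg) f.2 g.2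
  simpa using hconst

namespace IsCubicPlane

/-- A form of the Jordan curve theorem: by Euler's formula the cellular chain complex of the faces
is exact at the edges, so an even edge set `C` is the boundary between a set `S` of faces and its
complement. -/
theorem exists_sides (hF : IsCubicPlane G F) (hC : C ⊆ G.edgeFinset)
    (heven : ∀ v, Even #{e ∈ C | v ∈ e}) :
    ∃ S : Set (Finset (Sym2 V)), ∀ f ∈ F, ∀ g ∈ F, f ≠ g → ∀ e ∈ f, e ∈ g →
      (e ∈ C ↔ ¬(f ∈ S ↔ g ∈ S)) := by
  have hcard : Fintype.card G.edgeFinset + 2 ≤ Fintype.card V + Fintype.card F := by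
    have := hF.euler
    simp only [Fintype.card_coe]
    omega
  obtain ⟨s, hs⟩ := exists_mulVec_eq_of_mulVec_eq_zero hF.vertexEdgeMatrix_mul_edgeFaceMatrix
    (finrank_ker_vertexEdgeMatrix_transpose_le_one hF.connected.preconnected)
    (hF.finrank_ker_edgeFaceMatrix_le_one hF.connected.preconnected hF.cubic) hcard
    (vertexEdgeMatrix_mulVec_indicator_eq_zero hC heven)
  refine ⟨{f | ∃ hf : f ∈ F, s ⟨f, hf⟩ = 1}, fun f hf g hg hfg e hef heg => ?_⟩
  have he := (hF.isCycleEdgeSet f hf).subset_edgeFinset hef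
  have hsum := hF.edgeFaceMatrix_mulVec s ⟨f, hf⟩ ⟨g, hg⟩ (by simpa) hef heg he
  rw [hs] at hsum
  simp only [Set.mem_ofPred_eq, hf, hg, exists_true_left]
  have hzmod : ∀ x y : ZMod 2, x + y = 1 ↔ ¬(x = 1 ↔ y = 1) := by decide
  rw [← hzmod, ← hsum]
  simp

theorem sum_curvature (hF : IsCubicPlane G F) : ∑ f ∈ F, (6 - #f : ℤ) = 12 := by
  have hdeg : 3 * Fintype.card V = 2 * #G.edgeFinset := by
    rw [← G.sum_degrees_eq_twice_card_edges, sum_congr rfl fun v _ => hF.cubic v]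
    simp [mul_comm]
  have hfaces := hF.sum_card
  have heuler := hF.euler
  rw [sum_sub_distrib, sum_const, nsmul_eq_mul, ← Nat.cast_sum]
  omega

theorem exists_card_ne_six (hF : IsCubicPlane G F) : ∃ f ∈ F, #f ≠ 6 := by
  by_contra! h
  have hsum := hF.sum_curvature
  rw [sum_eq_zero fun f hf => by simp [h f hf]] at hsum
  norm_num at hsum

end IsCubicPlane

end CubicPlane

section ShortCycles

variable {V : Type*} {G : SimpleGraph V} {v a b c d : V}

/-- `IsQuad G a b c d` says that `a, b, c, d` are, in this order, the corners of a 4-cycle of `G`,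
which amounts to both diagonals being nondegenerate. -/
structure IsQuad (G : SimpleGraph V) (a b c d : V) : Prop where
  ab : G.Adj a b
  bc : G.Adj b c
  cd : G.Adj c d
  da : G.Adj d a
  ne_ac : a ≠ c
  ne_bd : b ≠ d

namespace IsQuad

theorem rotate (h : IsQuad G a b c d) : IsQuad G b c d a :=
  ⟨h.bc, h.cd, h.da, h.ab, h.ne_bd, h.ne_ac.symm⟩

theorem reflect (h : IsQuad G a b c d) : IsQuad G a d c b :=
  ⟨h.da.symm, h.cd.symm, h.bc.symm, h.ab.symm, h.ne_ac, h.ne_bd.symm⟩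

theorem isCycleEdgeSet [DecidableEq V] (h : IsQuad G a b c d) :
    IsCycleEdgeSet G {s(a, b), s(b, c), s(c, d), s(d, a)} := by
  refine ⟨a, .cons h.ab (.cons h.bc (.cons h.cd (.cons h.da .nil))), ?_, by simp⟩
  simp [Walk.cons_isCycle_iff, Walk.isPath_def, h.ab.ne', h.bc.ne, h.cd.ne, h.da.ne, h.ne_ac,
    h.ne_ac.symm, h.ne_bd, h.ab.ne]

end IsQuad

theorem isCycleEdgeSet_triangle [DecidableEq V] (hab : G.Adj a b) (hbc : G.Adj b c)
    (hca : G.Adj c a) : IsCycleEdgeSet G {s(a, b), s(b, c), s(c, a)} := by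
  refine ⟨a, .cons hab (.cons hbc (.cons hca .nil)), ?_, by simp⟩
  simp [Walk.cons_isCycle_iff, Walk.isPath_def, hab.ne, hab.ne', hbc.ne, hca.ne, hca.ne']

theorem exists_isQuad_of_isCycle {w : G.Walk v v} (hw : w.IsCycle) (hlength : w.length = 4) :
    ∃ b c d, IsQuad G v b c d := by
  have hnodup := hw.support_nodup
  match w with
  | .cons (v := b) hab (.cons (v := c) hbc (.cons (v := d) hcd (.cons hda .nil))) =>
    refine ⟨b, c, d, hab, hbc, hcd, hda, ?_, ?_⟩ <;> grind [Walk.support_cons, Walk.support_nil]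
  | .nil | .cons _ .nil | .cons _ (.cons _ .nil) | .cons _ (.cons _ (.cons _ .nil))
  | .cons _ (.cons _ (.cons _ (.cons _ (.cons _ _)))) => grind [Walk.length_cons, Walk.length_nil]

end ShortCycles

section Sides

variable {V : Type*} [Fintype V] [DecidableEq V] {G : SimpleGraph V} [DecidableRel G.Adj]
  {F : Finset (Finset (Sym2 V))} {f g : Finset (Sym2 V)} {a b c d : V}

namespace IsCubicPlane

theorem cliqueFree_three (hF : IsCubicPlane G F) (hsize : ∀ f ∈ F, 3 < #f) : G.CliqueFree 3 := by
  intro t ht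
  obtain ⟨a, b, c, hab, hac, hbc, rfl⟩ := is3Clique_iff.1 ht
  have hC := isCycleEdgeSet_triangle hab hbc hac.symm
  obtain ⟨S, hS⟩ := hF.exists_sides hC.subset_edgeFinset hC.even_card_filter_mem
  have hface (f) (hf : f ∈ F) : ¬(s(a, b) ∈ f ∧ s(b, c) ∈ f ∧ s(c, a) ∈ f) := fun hsub =>
    hC.not_subset_of_card_lt (hF.isCycleEdgeSet f hf) (card_le_three.trans_lt (hsize f hf))
      (by simpa [insert_subset_iff] using hsub)
  obtain ⟨ka, hka, ha_ca, ha_ab, -⟩ := hF.exists_hasCorner (hF.cubic a) hac hab hbc.ne.symm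
  obtain ⟨kb, hkb, hb_ab, hb_bc, -⟩ := hF.exists_hasCorner (hF.cubic b) hab.symm hbc hac.ne
  obtain ⟨kc, hkc, hc_bc, hc_ca, -⟩ := hF.exists_hasCorner (hF.cubic c) hbc.symm hac.symm
    hab.ne.symm
  rw [Sym2.eq_swap] at ha_ca hb_ab hc_bc
  have hAB := hS ka hka kb hkb (by grind) _ ha_ab hb_ab
  have hBC := hS kb hkb kc hkc (by grind) _ hb_bc hc_bc
  have hCA := hS kc hkc ka hka (by grind) _ hc_ca ha_ca
  simp only [mem_insert, mem_singleton, true_or, or_true, true_iff] at hAB hBC hCA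
  tauto

/-- Consecutive corners of a 4-cycle lie in the same face or on different sides of the cycle, and
no face covers three of them. -/
theorem exists_faces_of_isQuad (hF : IsCubicPlane G F) (hsize : ∀ f ∈ F, 4 < #f)
    (hQ : IsQuad G a b c d) (hf : f ∈ F) (hfa : HasCorner f d a b)
    (hg : g ∈ F) (hgc : HasCorner g b c d) :
    ∃ k ∈ F, ∃ l ∈ F, HasCorner k a b c ∧ HasCorner l c d a ∧
      (f = k ∧ g = l ∨ f = l ∧ g = k ∨ f ≠ k ∧ f ≠ l ∧ g ≠ k ∧ g ≠ l) := by
  have hC := hQ.isCycleEdgeSet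
  obtain ⟨S, hS⟩ := hF.exists_sides hC.subset_edgeFinset hC.even_card_filter_mem
  have hface (k) (hk : k ∈ F) :
      ¬(s(a, b) ∈ k ∧ s(b, c) ∈ k ∧ s(c, d) ∈ k ∧ s(d, a) ∈ k) := fun hsub =>
    hC.not_subset_of_card_lt (hF.isCycleEdgeSet k hk) (card_le_four.trans_lt (hsize k hk))
      (by simpa [insert_subset_iff] using hsub)
  obtain ⟨k, hk, hkb⟩ := hF.exists_hasCorner (hF.cubic b) hQ.ab.symm hQ.bc hQ.ne_ac
  obtain ⟨l, hl, hld⟩ := hF.exists_hasCorner (hF.cubic d) hQ.cd.symm hQ.da hQ.ne_ac.symm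
  refine ⟨k, hk, l, hl, hkb, hld, ?_⟩
  obtain ⟨hfda, hfab, -⟩ := hfa
  obtain ⟨hgbc, hgcd, -⟩ := hgc
  obtain ⟨hkab, hkbc, -⟩ := hkb
  obtain ⟨hlcd, hlda, -⟩ := hld
  rw [Sym2.eq_swap] at hfda hgbc hkab hlcd
  have hfk (h : f ≠ k) := hS f hf k hk h _ hfab hkab
  have hkg (h : k ≠ g) := hS k hk g hg h _ hkbc hgbc
  have hgl (h : g ≠ l) := hS g hg l hl h _ hgcd hlcd
  have hlf (h : l ≠ f) := hS l hl f hf h _ hlda hfda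
  have hfg : f ≠ g := by
    rintro rfl
    exact hface f hf ⟨hfab, hgbc, hgcd, hfda⟩
  have hkl : k ≠ l := by
    rintro rfl
    exact hface k hk ⟨hkab, hkbc, hlcd, hlda⟩
  simp only [mem_insert, mem_singleton, true_or, or_true, true_iff] at hfk hkg hgl hlf
  grind

theorem hasCorner_or_hasCorner_or_hasPath (hF : IsCubicPlane G F) (hsize : ∀ f ∈ F, 4 < #f)
    (hQ : IsQuad G a b c d) (hf : f ∈ F) (hfa : HasCorner f d a b)
    (hg : g ∈ F) (hgc : HasCorner g b c d) :
    (HasCorner f a b c ∧ HasCorner g c d a) ∨ (HasCorner f c d a ∧ HasCorner g a b c) ∨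
      ∃ u v, HasPath f u d a b v ∧ HasPath g u d c b v := by
  obtain ⟨k, hk, l, hl, hkb, hld, ⟨rfl, rfl⟩ | ⟨rfl, rfl⟩ | ⟨hfk, hfl, hgk, hgl⟩⟩ :=
    hF.exists_faces_of_isQuad hsize hQ hf hfa hg hgc
  · exact Or.inl ⟨hkb, hld⟩
  · exact Or.inr (Or.inl ⟨hld, hkb⟩)
  · obtain ⟨u, hu, huc, hua⟩ := exists_adj_ne_ne (hF.cubic d) c a
    obtain ⟨v, hv, hva, hvc⟩ := exists_adj_ne_ne (hF.cubic b) a c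
    refine Or.inr (Or.inr ⟨u, v, ⟨?_, hfa, ?_⟩, ⟨?_, hgc.symm, ?_⟩⟩)
    · exact (hF.hasCorner_of_mem_of_ne (hF.cubic d) hf hl hfl hld.symm hu hua huc
        (Sym2.eq_swap ▸ hfa.left)).symm
    · exact hF.hasCorner_of_mem_of_ne (hF.cubic b) hf hk hfk hkb hv hva hvc
        (Sym2.eq_swap ▸ hfa.right)
    · exact (hF.hasCorner_of_mem_of_ne (hF.cubic d) hg hl hgl hld hu huc hua
        (Sym2.eq_swap ▸ hgc.right)).symm
    · exact hF.hasCorner_of_mem_of_ne (hF.cubic b) hg hk hgk hkb.symm hv hvc hva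
        (Sym2.eq_swap ▸ hgc.left)

end IsCubicPlane

end Sides

section Fullerene

variable {V : Type*} [Fintype V] [DecidableEq V] {G : SimpleGraph V} [DecidableRel G.Adj]
  {F : Finset (Finset (Sym2 V))} {f g : Finset (Sym2 V)} {u v a b c d : V}

/-- `v` lies on some 4-cycle of `G`: in a fullerene this passes from `v` to its neighbours. -/
def InQuad (G : SimpleGraph V) (v : V) : Prop :=
  ∃ b c d, IsQuad G v b c d

/-- `f` turns along some 4-cycle of `G` at one of its corners: in a fullerene this forces `f` to be
a hexagon. -/
def HasQuadCorner (G : SimpleGraph V) (f : Finset (Sym2 V)) : Prop :=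
  ∃ a b c d, IsQuad G a b c d ∧ HasCorner f d a b

namespace IsFullerene

theorem four_lt_card (hG : IsFullerene G F) (f : Finset (Sym2 V)) (hf : f ∈ F) : 4 < #f := by
  have := hG.face_size f hf
  omega

theorem cliqueFree_three (hG : IsFullerene G F) : G.CliqueFree 3 :=
  hG.isCubicPlane.cliqueFree_three fun f hf => (Nat.lt_succ_self 3).trans (hG.four_lt_card f hf)

theorem not_adj_of_adj_of_adj (hG : IsFullerene G F) (hab : G.Adj a b) (hbc : G.Adj b c) :
    ¬G.Adj a c := fun hac =>
  hG.cliqueFree_three {a, b, c} (is3Clique_triple_iff.2 ⟨hab, hac, hbc⟩)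

theorem exists_isQuad_of_two_corners (hG : IsFullerene G F) (hf : f ∈ F) (hQ : IsQuad G a b c d)
    (hfa : HasCorner f d a b) (hfb : HasCorner f a b c) :
    #f = 6 ∧ ∃ x y, IsQuad G c x y d ∧ HasCorner f a d y := by
  have hcycle : IsCycleEdgeSet G f := hG.face_cycle f hf
  obtain ⟨x, hx⟩ := hcycle.exists_hasCorner (Sym2.eq_swap ▸ hfb.right : s(c, b) ∈ f)
  have hpath : HasPath f d a b c x := ⟨hfa, hfb, hx⟩
  have hcx := hcycle.adj hx.right
  rcases hG.face_size f hf with h5 | h6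
  · obtain ⟨-, hxd⟩ := hcycle.nodup_and_mem_of_card_eq_five h5 hpath
    exact absurd hQ.cd (hG.not_adj_of_adj_of_adj hcx (hcycle.adj hxd))
  · obtain ⟨y, hnodup, hxy, hyd⟩ := hcycle.nodup_and_exists_of_card_eq_six h6 hpath
    have hcy : c ≠ y := by grind
    have hxd : x ≠ d := by grind
    have hay : a ≠ y := by grind
    exact ⟨h6, x, y, ⟨hcx, hcycle.adj hxy, hcycle.adj hyd, hQ.cd.symm, hcy, hxd⟩,
      Sym2.eq_swap ▸ hfa.left, Sym2.eq_swap ▸ hyd, hay⟩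

theorem ne_of_hasPath (hG : IsFullerene G F) (hg : g ∈ F)
    (hfp : HasPath f u d a b v) (hgp : HasPath g u d c b v) (hac : a ≠ c) : f ≠ g := by
  rintro rfl
  have hcycle : IsCycleEdgeSet G f := hG.face_cycle f hg
  rcases hcycle.eq_or_eq_of_hasCorner hfp.corner₁ hgp.corner₁.right with h | h
  exacts [hgp.corner₁.ne h.symm, hac h.symm]

theorem card_eq_six_of_hasPath (hG : IsFullerene G F) (hf : f ∈ F) (hg : g ∈ F)
    (hfp : HasPath f u d a b v) (hgp : HasPath g u d c b v) (hac : a ≠ c) : #f = 6 := by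
  have hfcycle : IsCycleEdgeSet G f := hG.face_cycle f hf
  have hgcycle : IsCycleEdgeSet G g := hG.face_cycle g hg
  refine (hG.face_size f hf).resolve_left fun hf5 => ?_
  obtain ⟨hnodup, hfvu⟩ := hfcycle.nodup_and_mem_of_card_eq_five hf5 hfp
  rcases hG.face_size g hg with hg5 | hg6
  · obtain ⟨-, hgvu⟩ := hgcycle.nodup_and_mem_of_card_eq_five hg5 hgp
    have hdv : d ≠ v := by grind
    refine hG.ne_of_hasPath hg hfp hgp hac (hG.isCubicPlane.eq_of_hasCorner (hG.cubic u) hf hg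
      (a := d) (b := v) ?_ ?_)
    · exact ⟨Sym2.eq_swap ▸ hfp.corner₁.left, Sym2.eq_swap ▸ hfvu, hdv⟩
    · exact ⟨Sym2.eq_swap ▸ hgp.corner₁.left, Sym2.eq_swap ▸ hgvu, hdv⟩
  · obtain ⟨x, -, hvx, hxu⟩ := hgcycle.nodup_and_exists_of_card_eq_six hg6 hgp
    exact hG.not_adj_of_adj_of_adj (hgcycle.adj hvx) (hgcycle.adj hxu) (hfcycle.adj hfvu)

theorem exists_isQuad_of_hasPath (hG : IsFullerene G F) (hf : f ∈ F) (hg : g ∈ F)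
    (hfp : HasPath f u d a b v) (hgp : HasPath g u d c b v) (hac : a ≠ c) :
    ∃ x y, IsQuad G u x v y := by
  have hfcycle : IsCycleEdgeSet G f := hG.face_cycle f hf
  have hgcycle : IsCycleEdgeSet G g := hG.face_cycle g hg
  obtain ⟨x, hnodup, hvx, hxu⟩ := hfcycle.nodup_and_exists_of_card_eq_six
    (hG.card_eq_six_of_hasPath hf hg hfp hgp hac) hfp
  obtain ⟨y, -, hvy, hyu⟩ := hgcycle.nodup_and_exists_of_card_eq_six
    (hG.card_eq_six_of_hasPath hg hf hgp hfp hac.symm) hgp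
  have huv : u ≠ v := by grind
  have hdx : d ≠ x := by grind
  have hxy : x ≠ y := by
    rintro rfl
    refine hG.ne_of_hasPath hg hfp hgp hac (hG.isCubicPlane.eq_of_hasCorner (hG.cubic u) hf hg
      (a := d) (b := x) ?_ ?_)
    · exact ⟨Sym2.eq_swap ▸ hfp.corner₁.left, Sym2.eq_swap ▸ hxu, hdx⟩
    · exact ⟨Sym2.eq_swap ▸ hgp.corner₁.left, Sym2.eq_swap ▸ hyu, hdx⟩
  exact ⟨x, y, (hfcycle.adj hxu).symm, (hfcycle.adj hvx).symm, hgcycle.adj hvy, hgcycle.adj hyu,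
    huv, hxy⟩

theorem card_eq_six_of_hasQuadCorner (hG : IsFullerene G F) (hf : f ∈ F)
    (hquad : HasQuadCorner G f) : #f = 6 := by
  obtain ⟨a, b, c, d, hQ, hfa⟩ := hquad
  obtain ⟨g, hg, hgc⟩ := hG.isCubicPlane.exists_hasCorner (hG.cubic c) hQ.bc.symm hQ.cd hQ.ne_bd
  rcases hG.isCubicPlane.hasCorner_or_hasCorner_or_hasPath hG.four_lt_card hQ hf hfa hg hgc with
    ⟨hfb, -⟩ | ⟨hfd, -⟩ | ⟨u, v, hfp, hgp⟩
  · exact (hG.exists_isQuad_of_two_corners hf hQ hfa hfb).1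
  · exact (hG.exists_isQuad_of_two_corners hf hQ.reflect hfa.symm hfd.symm).1
  · exact hG.card_eq_six_of_hasPath hf hg hfp hgp hQ.ne_ac

theorem inQuad_and_hasQuadCorner_of_two_corners (hG : IsFullerene G F) (hQ : IsQuad G a b c d)
    (hf : f ∈ F) (hfb : HasCorner f a b c) (hfc : HasCorner f b c d)
    (hu : G.Adj a u) (hub : u ≠ b) (hud : u ≠ d) :
    InQuad G u ∧ ∀ g ∈ F, s(a, u) ∈ g → HasQuadCorner G g := by
  have hF := hG.isCubicPlane
  obtain ⟨-, x, y, hQ', hfa⟩ := hG.exists_isQuad_of_two_corners hf hQ.rotate hfb hfc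
  obtain rfl : u = y := eq_of_adj_of_ne_of_ne (hG.cubic a) hQ.ab hQ.da.symm hQ.ne_bd hQ'.cd.symm
    hfa.ne.symm hQ'.ne_ac.symm hu hub hud
  obtain ⟨l, hl, hla⟩ := hF.exists_hasCorner (hG.cubic a) hu hQ.da.symm hud
  have hfl : f ≠ l := by
    rintro rfl
    rcases (hF.isCycleEdgeSet f hf).eq_or_eq_of_hasCorner hla hfa.left with h | h
    exacts [hub h.symm, hQ.ne_bd h]
  refine ⟨⟨_, _, _, hQ'.rotate.rotate⟩, fun g hg hgu => ?_⟩
  rcases hF.eq_or_eq_of_mem hf hl hfl hfa.right hla.left hg hgu with rfl | rfl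
  · exact ⟨_, _, _, _, hQ.rotate, hfb⟩
  · exact ⟨_, _, _, _, hQ'.rotate.rotate.rotate, hla⟩

theorem inQuad_and_hasQuadCorner_of_adj (hG : IsFullerene G F) (hQ : IsQuad G a b c d)
    (hu : G.Adj a u) (hub : u ≠ b) (hud : u ≠ d) :
    InQuad G u ∧ ∀ g ∈ F, s(a, u) ∈ g → HasQuadCorner G g := by
  have hF := hG.isCubicPlane
  obtain ⟨k, hk, hkb⟩ := hF.exists_hasCorner (hF.cubic b) hQ.ab.symm hQ.bc hQ.ne_ac
  obtain ⟨l, hl, hld⟩ := hF.exists_hasCorner (hF.cubic d) hQ.cd.symm hQ.da hQ.ne_ac.symm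
  rcases hF.hasCorner_or_hasCorner_or_hasPath hG.four_lt_card hQ.rotate hk hkb hl hld with
    ⟨hkc, -⟩ | ⟨-, hlc⟩ | ⟨w, v, hkp, hlp⟩
  · exact hG.inQuad_and_hasQuadCorner_of_two_corners hQ hk hkb hkc hu hub hud
  · exact hG.inQuad_and_hasQuadCorner_of_two_corners hQ.reflect hl hld.symm hlc.symm hu hud hub
  · have hkl := hG.ne_of_hasPath hl hkp hlp hQ.ne_bd
    obtain rfl : u = w := eq_of_adj_of_ne_of_ne (hG.cubic a) hQ.ab hQ.da.symm hQ.ne_bd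
      ((hF.isCycleEdgeSet k hk).adj hkp.corner₁.left) hkp.corner₁.ne hlp.corner₁.ne hu hub hud
    obtain ⟨x, y, hQ'⟩ := hG.exists_isQuad_of_hasPath hk hl hkp hlp hQ.ne_bd
    refine ⟨⟨x, v, y, hQ'⟩, fun g hg hgu => ?_⟩
    rcases hF.eq_or_eq_of_mem hk hl hkl hkp.corner₁.left hlp.corner₁.left hg hgu with rfl | rfl
    · exact ⟨_, _, _, _, hQ.rotate, hkb⟩
    · exact ⟨_, _, _, _, hQ.rotate.rotate.rotate, hld⟩

theorem inQuad (hG : IsFullerene G F) (hQ : IsQuad G a b c d) (v : V) : InQuad G v := by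
  have hstep {v w : V} (hvw : G.Adj v w) : InQuad G v → InQuad G w := by
    rintro ⟨x, y, z, hQv⟩
    by_cases hwx : w = x
    · exact hwx ▸ ⟨_, _, _, hQv.rotate⟩
    by_cases hwz : w = z
    · exact hwz ▸ ⟨_, _, _, hQv.reflect.rotate⟩
    exact (hG.inQuad_and_hasQuadCorner_of_adj hQv hvw hwx hwz).1
  rw [← eq_of_forall_adj_eq hG.connected.preconnected (φ := InQuad G)
    (fun v w hvw => propext ⟨hstep hvw, hstep hvw.symm⟩) a v]
  exact ⟨b, c, d, hQ⟩

theorem hasQuadCorner (hG : IsFullerene G F) (hQ : IsQuad G a b c d) (hf : f ∈ F) :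
    HasQuadCorner G f := by
  have hcycle : IsCycleEdgeSet G f := hG.face_cycle f hf
  obtain ⟨v, w, hw⟩ := hcycle.exists_mem
  obtain ⟨w', hcorner⟩ := hcycle.exists_hasCorner hw
  obtain ⟨x, y, z, hQv⟩ := hG.inQuad hQ v
  have hthird {u : V} (hu : s(v, u) ∈ f) (hux : u ≠ x) (huz : u ≠ z) : HasQuadCorner G f :=
    (hG.inQuad_and_hasQuadCorner_of_adj hQv (hcycle.adj hu) hux huz).2 f hf hu
  by_cases hwx : w = x
  · by_cases hw'z : w' = z
    · exact ⟨v, x, y, z, hQv, hwx ▸ hw'z ▸ hcorner.symm⟩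
    · exact hthird hcorner.right (hwx ▸ hcorner.ne.symm) hw'z
  by_cases hwz : w = z
  · by_cases hw'x : w' = x
    · exact ⟨v, x, y, z, hQv, hw'x ▸ hwz ▸ hcorner⟩
    · exact hthird hcorner.right hw'x (hwz ▸ hcorner.ne.symm)
  exact hthird hw hwx hwz

theorem not_isQuad (hG : IsFullerene G F) : ¬IsQuad G a b c d := by
  intro hQ
  obtain ⟨f, hf, hcard⟩ := hG.isCubicPlane.exists_card_ne_six
  exact hcard (hG.card_eq_six_of_hasQuadCorner hf (hG.hasQuadCorner hQ hf))

end IsFullerene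

end Fullerene

/-- Every fullerene graph has girth `5`. -/
theorem fullerene_girth_five {V : Type*} [Fintype V] [DecidableEq V]
    (G : SimpleGraph V) [DecidableRel G.Adj] (F : Finset (Finset (Sym2 V)))
    (hG : IsFullerene G F) : G.egirth = 5 := by
  have hF := hG.isCubicPlane
  apply le_antisymm
  · obtain ⟨f, hf, hcard⟩ := hF.exists_card_ne_six
    obtain ⟨v, w, hw, rfl⟩ := hG.face_cycle f hf
    have hlength : w.length = 5 := by
      rw [← (hG.face_size _ hf).resolve_right hcard, List.toFinset_card_of_nodup hw.edges_nodup,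
        Walk.length_edges]
    simpa [hlength] using egirth_le_length hw
  · refine le_egirth.2 fun v w hw => ?_
    have hthree : 3 ≤ w.length := hw.three_le_length
    have hne_three : w.length ≠ 3 := fun h =>
      (is3Clique_iff_exists_cycle_length_three.2 ⟨v, w, hw, h⟩).elim hG.cliqueFree_three
    have hne_four : w.length ≠ 4 := fun h =>
      let ⟨_, _, _, hQ⟩ := exists_isQuad_of_isCycle hw h
      hG.not_isQuad hQ
    have hfive : 5 ≤ w.length := by omega
    exact_mod_cast hfive
end

section
/- Every fullerene graph is 3-connected. -/
/-!
A separating set of at most two vertices in a cubic graph gives a cut of at most two edges: each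
separating vertex sends at most one edge to one of the two sides and can be moved to the other.
So it suffices that there is no such edge cut. Every face through a cut edge crosses the cut again,
so the cut consists of exactly two edges, and the two faces `f` and `g` through one of them both
contain the other.

Since `f` and `g` have at most `12` vertices altogether, one shore contains at most `6` of them,
counted with multiplicity. Both `f` and `g` pass through the ends `x₁`, `x₂` of the cut edges in
this shore, so at most two more vertices of the shore lie on their rim, and each of these is joined
by exactly one further edge, a spoke, to the rest of the shore. A spoke between the two of them
would confine the two faces containing it to the four rim vertices, where they do not fit. Hence
the vertices of the shore off the rim are again separated by the spokes, a cut of at most two edges.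
The two faces through these spokes take at least `6` of their at most `12` vertices from the rim, so
again at most `6` lie in the smaller shore, and the descent never ends.
-/

open scoped Finset

section Connectivity

variable {V : Type*} {G : SimpleGraph V}

lemma reachable_iff_forall_exists_adj {u v : V} :
    G.Reachable u v ↔ ∀ A : Set V, u ∈ A → v ∉ A → ∃ a ∈ A, ∃ b ∉ A, G.Adj a b := by
  refine ⟨fun ⟨p⟩ A hu hv ↦ ?_, fun h ↦ ?_⟩
  · obtain ⟨d, -, ha, hb⟩ := p.exists_boundary_dart A hu hv
    exact ⟨d.fst, ha, d.snd, hb, d.adj⟩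
  · by_contra huv
    obtain ⟨a, ha, b, hb, hab⟩ := h {x | G.Reachable u x} .rfl huv
    exact hb (ha.trans hab.reachable)

variable [Fintype V] [DecidableEq V] [DecidableRel G.Adj]

lemma isEdgeConnected_iff_le_card_interedges {k : ℕ} :
    G.IsEdgeConnected k ↔
      ∀ A : Finset V, A.Nonempty → Aᶜ.Nonempty → k ≤ #(G.interedges A Aᶜ) := by
  refine ⟨fun h A ⟨u, hu⟩ ⟨v, hv⟩ ↦ ?_, fun h u v s hs ↦ ?_⟩
  · by_contra! hlt
    set s := (G.interedges A Aᶜ).image fun d ↦ s(d.1, d.2)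
    have hs : (s : Set (Sym2 V)).encard < k := by
      rw [Set.encard_coe_eq_coe_finsetCard]
      exact_mod_cast Finset.card_image_le.trans_lt hlt
    obtain ⟨a, ha, b, hb, hab⟩ := reachable_iff_forall_exists_adj.1 (h u v hs) A
      (by simpa using hu) (by simpa using hv)
    rw [SimpleGraph.deleteEdges_adj] at hab
    refine hab.2 (Finset.mem_image.2 ⟨(a, b), ?_, rfl⟩)
    rw [SimpleGraph.mk_mem_interedges_iff]
    exact ⟨ha, Finset.mem_compl.2 hb, hab.1⟩
  · refine reachable_iff_forall_exists_adj.2 fun A hu hv ↦ ?_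
    classical
    by_contra! hs'
    have hmem (d : V × V) (hd : d ∈ G.interedges A.toFinset A.toFinsetᶜ) :
        d.1 ∈ A ∧ d.2 ∉ A ∧ s(d.1, d.2) ∈ s := by
      obtain ⟨ha, hb, hab⟩ : d.1 ∈ A ∧ d.2 ∉ A ∧ G.Adj d.1 d.2 := by
        simpa [SimpleGraph.interedges, Rel.mem_interedges_iff] using hd
      exact ⟨ha, hb, by simpa [SimpleGraph.deleteEdges_adj, hab] using hs' d.1 ha d.2 hb⟩
    have hinj : Set.InjOn (fun d : V × V ↦ s(d.1, d.2))
        (G.interedges A.toFinset A.toFinsetᶜ : Set (V × V)) := by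
      intro d hd d' hd' heq
      have h₁ := hmem d hd
      have h₂ := hmem d' hd'
      simp only [Sym2.eq_iff] at heq
      grind
    have hle := h A.toFinset ⟨u, by simpa using hu⟩ ⟨v, by simpa using hv⟩
    refine (hs.trans_le (Nat.cast_le.2 hle)).not_ge ?_
    rw [← Set.encard_coe_eq_coe_finsetCard, ← hinj.encard_image]
    refine Set.encard_le_encard ?_
    rintro _ ⟨d, hd, rfl⟩
    exact (hmem d hd).2.2

lemma card_neighborFinset_inter_add_le {A B : Finset V} (hAB : Disjoint A B) (v : V) :
    #(G.neighborFinset v ∩ A) + #(G.neighborFinset v ∩ B) ≤ G.degree v := by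
  rw [← Finset.card_union_of_disjoint
      (hAB.mono Finset.inter_subset_right Finset.inter_subset_right),
    ← Finset.inter_union_distrib_left, ← G.card_neighborFinset_eq_degree]
  exact Finset.card_le_card Finset.inter_subset_left

lemma exists_card_interedges_le (hdeg : ∀ v, G.degree v ≤ 3) {A s : Finset V}
    (hsep : ∀ a ∈ A, ∀ b, G.Adj a b → b ∈ A ∪ s) :
    ∃ T ⊆ s, #(G.interedges (A ∪ T) (A ∪ T)ᶜ) ≤ #s := by
  let B : Finset V := (A ∪ s)ᶜ
  let T : Finset V := {v ∈ s | #(G.neighborFinset v ∩ B) ≤ 1}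
  have hTs : T ⊆ s := Finset.filter_subset _ _
  refine ⟨T, hTs, ?_⟩
  set S := A ∪ T
  let star (v : V) : Finset (V × V) :=
    if v ∈ T then {v} ×ˢ (G.neighborFinset v ∩ B) else (G.neighborFinset v ∩ S) ×ˢ {v}
  have hcover : G.interedges S Sᶜ ⊆ s.biUnion star := by
    rintro ⟨a, b⟩ hab
    rw [SimpleGraph.mk_mem_interedges_iff] at hab
    grind [SimpleGraph.mem_neighborFinset, SimpleGraph.adj_comm, Finset.mem_compl]
  have hstar : ∀ v ∈ s, #(star v) ≤ 1 := by
    intro v hv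
    by_cases hvT : v ∈ T
    · simpa [star, hvT] using (Finset.mem_filter.1 hvT).2
    · have hB : 1 < #(G.neighborFinset v ∩ B) := by simpa [T, hv] using hvT
      have hSB : Disjoint S B :=
        disjoint_compl_right.mono_left (Finset.union_subset_union_right hTs)
      have := card_neighborFinset_inter_add_le (G := G) hSB v
      have := hdeg v
      simp only [star, hvT, if_false, Finset.card_product, Finset.card_singleton]
      omega
  calc #(G.interedges S Sᶜ) ≤ #(s.biUnion star) := Finset.card_le_card hcover
    _ ≤ #s * 1 := Finset.card_biUnion_le_card_mul _ _ _ hstar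
    _ = #s := mul_one _

theorem induce_compl_connected_of_isEdgeConnected (hdeg : ∀ v, G.degree v ≤ 3) {k : ℕ}
    (hG : G.IsEdgeConnected k) {s : Finset V} (hs : #s < k) (hne : sᶜ.Nonempty) :
    (G.induce (s : Set V)ᶜ).Connected := by
  obtain ⟨x, hx⟩ := hne
  have : Nonempty ((s : Set V)ᶜ : Set V) := ⟨x, by simpa using hx⟩
  refine ⟨fun u v ↦ reachable_iff_forall_exists_adj.2 fun C hu hv ↦ ?_⟩
  classical
  by_contra! hC
  let A : Finset V := C.toFinset.map (Function.Embedding.subtype _)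
  have hA (a : V) : a ∈ A ↔ ∃ ha : a ∉ s, ⟨a, by simpa using ha⟩ ∈ C := by
    simp [A]
  have hus : u.1 ∉ s := u.2
  have hvs : v.1 ∉ s := v.2
  obtain ⟨T, hTs, hT⟩ := exists_card_interedges_le hdeg (A := A) (s := s) fun a ha b hab ↦ by
    obtain ⟨has, haC⟩ := (hA a).1 ha
    rw [Finset.mem_union, or_iff_not_imp_right, hA]
    intro hbs
    refine ⟨hbs, ?_⟩
    by_contra hbC
    exact hC _ haC _ hbC hab
  have huS : u.1 ∈ A ∪ T := Finset.mem_union_left _ ((hA _).2 ⟨hus, hu⟩)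
  have hvS : v.1 ∈ (A ∪ T)ᶜ := by
    rw [Finset.mem_compl, Finset.mem_union, hA]
    rintro (⟨_, hvC⟩ | hvT)
    exacts [hv hvC, hvs (hTs hvT)]
  have := isEdgeConnected_iff_le_card_interedges.1 hG (A ∪ T) ⟨_, huS⟩ ⟨_, hvS⟩
  omega

end Connectivity

section CycleEdges

variable {V : Type*} {G : SimpleGraph V}

/-- The finite edge set `f` is the edge set of a cycle of `G`. The faces of an embedded graph are
encoded by such edge sets, forgetting base point and orientation. -/
def IsCycleEdges [DecidableEq V] (G : SimpleGraph V) (f : Finset (Sym2 V)) : Prop :=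
  ∃ (v : V) (w : G.Walk v v), w.IsCycle ∧ w.edges.toFinset = f

/-- The vertices incident to an edge of `f`; for a face, the vertices on its boundary. -/
def edgeSupport [DecidableEq V] (f : Finset (Sym2 V)) : Finset V :=
  f.biUnion Sym2.toFinset

/-- The neighbours of `v` in the graph with edge set `f`. -/
def edgeNeighbors [Fintype V] [DecidableEq V] (f : Finset (Sym2 V)) (v : V) : Finset V :=
  {a | s(v, a) ∈ f}

variable [DecidableEq V] {f : Finset (Sym2 V)} {u v a b : V}

lemma mem_edgeSupport : v ∈ edgeSupport f ↔ ∃ a, s(v, a) ∈ f := by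
  simp only [edgeSupport, Finset.mem_biUnion, Sym2.mem_toFinset]
  constructor
  · rintro ⟨e, he, hv⟩
    obtain ⟨a, rfl⟩ := hv
    exact ⟨a, he⟩
  · rintro ⟨a, ha⟩
    exact ⟨_, ha, Sym2.mem_mk_left v a⟩

lemma left_mem_edgeSupport (h : s(a, b) ∈ f) : a ∈ edgeSupport f :=
  mem_edgeSupport.2 ⟨b, h⟩

lemma right_mem_edgeSupport (h : s(a, b) ∈ f) : b ∈ edgeSupport f :=
  left_mem_edgeSupport (Sym2.eq_swap ▸ h)

@[simp]
lemma mem_edgeNeighbors [Fintype V] : a ∈ edgeNeighbors f v ↔ s(v, a) ∈ f := by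
  simp [edgeNeighbors]

lemma edgeSupport_edges_toFinset {w : G.Walk u v} (hw : ¬ w.Nil) :
    edgeSupport w.edges.toFinset = w.support.toFinset := by
  ext a
  simp only [edgeSupport, Finset.mem_biUnion, List.mem_toFinset, Sym2.mem_toFinset,
    SimpleGraph.Walk.mem_support_iff_exists_mem_edges_of_not_nil hw]

namespace IsCycleEdges

lemma adj (hf : IsCycleEdges G f) (h : s(a, b) ∈ f) : G.Adj a b := by
  obtain ⟨v, w, -, rfl⟩ := hf
  exact w.adj_of_mem_edges (by simpa using h)

lemma edgeNeighbors_subset [Fintype V] [DecidableRel G.Adj] (hf : IsCycleEdges G f) (v : V) :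
    edgeNeighbors f v ⊆ G.neighborFinset v := fun a ha ↦ by
  simpa using hf.adj (mem_edgeNeighbors.1 ha)

lemma card_edgeNeighbors [Fintype V] (hf : IsCycleEdges G f) (hv : v ∈ edgeSupport f) :
    #(edgeNeighbors f v) = 2 := by
  obtain ⟨u, w, hw, rfl⟩ := hf
  rw [edgeSupport_edges_toFinset hw.not_nil, List.mem_toFinset] at hv
  rw [← hw.ncard_neighborSet_toSubgraph_eq_two hv, ← Set.ncard_coe_finset]
  congr 1
  ext a
  simp [← SimpleGraph.Subgraph.mem_edgeSet]

lemma card_edgeSupport (hf : IsCycleEdges G f) : #(edgeSupport f) = #f := by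
  obtain ⟨u, w, hw, rfl⟩ := hf
  have htail : w.support.toFinset = w.support.tail.toFinset := by
    ext a
    rw [List.mem_toFinset, List.mem_toFinset, SimpleGraph.Walk.mem_support_iff]
    exact or_iff_right_of_imp fun ha ↦ ha ▸ SimpleGraph.Walk.end_mem_tail_support hw.not_nil
  rw [edgeSupport_edges_toFinset hw.not_nil, htail, List.toFinset_card_of_nodup hw.support_nodup,
    List.toFinset_card_of_nodup hw.edges_nodup]
  simp

lemma exists_crossing (hf : IsCycleEdges G f) {A : Set V} (hu : u ∈ A) (hv : v ∉ A)
    (huf : u ∈ edgeSupport f) (hvf : v ∈ edgeSupport f) (e : Sym2 V) :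
    ∃ a ∈ A, ∃ b ∉ A, s(a, b) ∈ f ∧ s(a, b) ≠ e := by
  obtain ⟨x, w, hw, rfl⟩ := hf
  rw [edgeSupport_edges_toFinset hw.not_nil, List.mem_toFinset] at huf hvf
  let H := SimpleGraph.fromEdgeSet (w.edges.toFinset : Set (Sym2 V))
  have hH : ∀ e ∈ w.edges, e ∈ H.edgeSet := by
    intro e he
    simp [H, he, G.not_isDiag_of_mem_edgeSet (w.edges_subset_edgeSet he)]
  have hconn : H.IsEdgeReachable 2 u v :=
    (hw.transfer hH).isTrail.isEdgeReachable_two (by simpa using huf) (by simpa using hvf)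
  obtain ⟨a, ha, b, hb, hab⟩ := reachable_iff_forall_exists_adj.1
    (SimpleGraph.isEdgeReachable_two.1 hconn e) A hu hv
  rw [SimpleGraph.deleteEdges_adj, SimpleGraph.fromEdgeSet_adj] at hab
  exact ⟨a, ha, b, hb, hab.1.1, hab.2⟩

end IsCycleEdges

end CycleEdges

section CycleDoubleCover

variable {V : Type*} [Fintype V] [DecidableEq V]

/-- A family `F` of cycles of `G`, given by their edge sets, such that every edge of `G` belongs to
exactly two of them. The face boundaries of a bridgeless plane graph in which every face is bounded
by a cycle form such a family. -/
structure IsCycleDoubleCover_s13 (G : SimpleGraph V) [DecidableRel G.Adj]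
    (F : Finset (Finset (Sym2 V))) : Prop where
  isCycleEdges : ∀ f ∈ F, IsCycleEdges G f
  card_filter_mem : ∀ e ∈ G.edgeFinset, #{f ∈ F | e ∈ f} = 2

namespace IsCycleDoubleCover_s13

variable {G : SimpleGraph V} [DecidableRel G.Adj] {F : Finset (Finset (Sym2 V))}
  {f g h : Finset (Sym2 V)} {v a b c t : V}

lemma exists_ne_of_adj (hF : IsCycleDoubleCover_s13 G F) (hab : G.Adj a b) :
    ∃ f ∈ F, ∃ g ∈ F, f ≠ g ∧ s(a, b) ∈ f ∧ s(a, b) ∈ g := by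
  obtain ⟨f, hf, g, hg, hfg⟩ := Finset.one_lt_card.1
    ((hF.card_filter_mem s(a, b) (by simpa using hab)).symm ▸ one_lt_two)
  rw [Finset.mem_filter] at hf hg
  exact ⟨f, hf.1, g, hg.1, hfg, hf.2, hg.2⟩

lemma eq_or_eq_of_mem_s13 (hF : IsCycleDoubleCover_s13 G F) (hf : f ∈ F) (hg : g ∈ F) (hh : h ∈ F)
    (hfg : f ≠ g) (haf : s(a, b) ∈ f) (hag : s(a, b) ∈ g) (hah : s(a, b) ∈ h) :
    h = f ∨ h = g := by
  have hcard := hF.card_filter_mem s(a, b) (by simpa using (hF.isCycleEdges f hf).adj haf)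
  have hsub : {f, g} ⊆ ({k ∈ F | s(a, b) ∈ k} : Finset _) := by
    simp [Finset.insert_subset_iff, hf, hg, haf, hag]
  have hmem : h ∈ ({k ∈ F | s(a, b) ∈ k} : Finset _) := Finset.mem_filter.2 ⟨hh, hah⟩
  rw [← Finset.eq_of_subset_of_card_le hsub (by rw [hcard, Finset.card_pair hfg])] at hmem
  simpa using hmem

lemma mem_or_mem_of_adj (hF : IsCycleDoubleCover_s13 G F) (hG : G.IsRegularOfDegree 3) (hf : f ∈ F)
    (hg : g ∈ F) (hfg : f ≠ g) (hvf : v ∈ edgeSupport f) (hvg : v ∈ edgeSupport g)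
    (hvt : G.Adj v t) : s(v, t) ∈ f ∨ s(v, t) ∈ g := by
  by_contra! hnot
  have herase {k} (hk : k ∈ F) (hvk : v ∈ edgeSupport k) (htk : s(v, t) ∉ k) :
      edgeNeighbors k v = (G.neighborFinset v).erase t := by
    refine Finset.eq_of_subset_of_card_le (Finset.subset_erase.2
      ⟨(hF.isCycleEdges k hk).edgeNeighbors_subset v, by simpa using htk⟩) ?_
    rw [Finset.card_erase_of_mem (by simpa using hvt), G.card_neighborFinset_eq_degree,
      hG.degree_eq, (hF.isCycleEdges k hk).card_edgeNeighbors hvk]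
  have hef := herase hf hvf hnot.1
  have heg := herase hg hvg hnot.2
  obtain ⟨j, hj, -, -, -, hjt, -⟩ := hF.exists_ne_of_adj hvt
  have hj2 := (hF.isCycleEdges j hj).card_edgeNeighbors (left_mem_edgeSupport hjt)
  obtain ⟨c, hcj, hct⟩ := Finset.exists_mem_ne (hj2 ▸ one_lt_two) t
  have hc : c ∈ (G.neighborFinset v).erase t :=
    Finset.mem_erase.2 ⟨hct, (hF.isCycleEdges j hj).edgeNeighbors_subset v hcj⟩
  rcases hF.eq_or_eq_of_mem_s13 hf hg hj hfg (mem_edgeNeighbors.1 (hef ▸ hc))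
    (mem_edgeNeighbors.1 (heg ▸ hc)) (mem_edgeNeighbors.1 hcj) with rfl | rfl
  exacts [hnot.1 hjt, hnot.2 hjt]

lemma exists_mem_of_mem_edgeSupport (hF : IsCycleDoubleCover_s13 G F) (hG : G.IsRegularOfDegree 3)
    (hf : f ∈ F) (hg : g ∈ F) (hvf : v ∈ edgeSupport f) (hvg : v ∈ edgeSupport g) :
    ∃ a, s(v, a) ∈ f ∧ s(v, a) ∈ g := by
  have hle : #(edgeNeighbors f v ∪ edgeNeighbors g v) ≤ 3 := by
    rw [← hG.degree_eq v, ← G.card_neighborFinset_eq_degree]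
    exact Finset.card_le_card (Finset.union_subset
      ((hF.isCycleEdges f hf).edgeNeighbors_subset v)
      ((hF.isCycleEdges g hg).edgeNeighbors_subset v))
  have hcf := (hF.isCycleEdges f hf).card_edgeNeighbors hvf
  have hcg := (hF.isCycleEdges g hg).card_edgeNeighbors hvg
  have hsum := Finset.card_union_add_card_inter (edgeNeighbors f v) (edgeNeighbors g v)
  obtain ⟨a, ha⟩ : (edgeNeighbors f v ∩ edgeNeighbors g v).Nonempty := by
    rw [← Finset.card_pos]
    omega
  exact ⟨a, by simpa using ha⟩

lemma eq_of_mem_of_mem (hF : IsCycleDoubleCover_s13 G F) (hG : G.IsRegularOfDegree 3) (hf : f ∈ F)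
    (hg : g ∈ F) (hac : a ≠ c) (haf : s(v, a) ∈ f) (hcf : s(v, c) ∈ f) (hag : s(v, a) ∈ g)
    (hcg : s(v, c) ∈ g) : f = g := by
  by_contra hfg
  have hvf := left_mem_edgeSupport haf
  have hvg := left_mem_edgeSupport hag
  have hsub : G.neighborFinset v ⊆ edgeNeighbors f v ∪ edgeNeighbors g v := fun t ht ↦ by
    simpa using hF.mem_or_mem_of_adj hG hf hg hfg hvf hvg (by simpa using ht)
  have hinter : {a, c} ⊆ edgeNeighbors f v ∩ edgeNeighbors g v := by
    simp [Finset.insert_subset_iff, *]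
  have h₁ := Finset.card_le_card hsub
  have h₂ := Finset.card_le_card hinter
  rw [G.card_neighborFinset_eq_degree, hG.degree_eq] at h₁
  rw [Finset.card_pair hac] at h₂
  have hsum := Finset.card_union_add_card_inter (edgeNeighbors f v) (edgeNeighbors g v)
  rw [(hF.isCycleEdges f hf).card_edgeNeighbors hvf,
    (hF.isCycleEdges g hg).card_edgeNeighbors hvg] at hsum
  omega

lemma exists_mem_and_mem_of_adj (hF : IsCycleDoubleCover_s13 G F) (hG : G.IsRegularOfDegree 3)
    (hva : G.Adj v a) (hvc : G.Adj v c) : ∃ j ∈ F, s(v, a) ∈ j ∧ s(v, c) ∈ j := by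
  obtain ⟨f, hf, g, hg, hfg, haf, hag⟩ := hF.exists_ne_of_adj hva
  rcases hF.mem_or_mem_of_adj hG hf hg hfg (left_mem_edgeSupport haf) (left_mem_edgeSupport hag)
    hvc with hcf | hcg
  exacts [⟨f, hf, haf, hcf⟩, ⟨g, hg, hag, hcg⟩]

end IsCycleDoubleCover_s13

end CycleDoubleCover

section TwoCut

variable {V : Type*}

/-- The edge `pt` of `G` lies on neither of the faces `f` and `g`; spokes are the edges along which
one leaves the rim of a cut into its core. -/
def IsSpoke (G : SimpleGraph V) (f g : Finset (Sym2 V)) (p t : V) : Prop :=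
  G.Adj p t ∧ s(p, t) ∉ f ∧ s(p, t) ∉ g

lemma IsSpoke.symm {G : SimpleGraph V} {f g : Finset (Sym2 V)} {p t : V}
    (hpt : IsSpoke G f g p t) : IsSpoke G f g t p := by
  rwa [IsSpoke, G.adj_comm, Sym2.eq_swap]

lemma IsSpoke.ne_of_mem {G : SimpleGraph V} {f g h : Finset (Sym2 V)} {p t : V}
    (hpt : IsSpoke G f g p t) (hh : s(p, t) ∈ h) : h ≠ f ∧ h ≠ g :=
  ⟨ne_of_mem_of_not_mem' hh hpt.2.1, ne_of_mem_of_not_mem' hh hpt.2.2⟩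

lemma isSpoke_faces_comm {G : SimpleGraph V} {f g : Finset (Sym2 V)} {p t : V} :
    IsSpoke G f g p t ↔ IsSpoke G g f p t :=
  and_congr_right' and_comm

variable [Fintype V] [DecidableEq V]

/-- The edges `x₁z₁` and `x₂z₂` form a cut with shore `A`, and the two faces on either side of both
edges are `f` and `g`. The endpoints `x₁` and `x₂` are the ones in `A`. -/
structure IsTwoCut (G : SimpleGraph V) [DecidableRel G.Adj] (F : Finset (Finset (Sym2 V)))
    (A : Finset V) (f g : Finset (Sym2 V)) (x₁ z₁ x₂ z₂ : V) : Prop where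
  interedges_eq : G.interedges A Aᶜ = {(x₁, z₁), (x₂, z₂)}
  edges_ne : (x₁, z₁) ≠ (x₂, z₂)
  left_mem : f ∈ F
  right_mem : g ∈ F
  faces_ne : f ≠ g
  fst_mem_left : s(x₁, z₁) ∈ f
  snd_mem_left : s(x₂, z₂) ∈ f
  fst_mem_right : s(x₁, z₁) ∈ g
  snd_mem_right : s(x₂, z₂) ∈ g

/-- The vertices of the shore `A` on one of the faces `f` and `g`. -/
def cutRim (A : Finset V) (f g : Finset (Sym2 V)) : Finset V :=
  A ∩ (edgeSupport f ∪ edgeSupport g)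

/-- The vertices of the shore `A` on neither of the faces `f` and `g`. -/
def cutCore (A : Finset V) (f g : Finset (Sym2 V)) : Finset V :=
  A \ (edgeSupport f ∪ edgeSupport g)

variable {G : SimpleGraph V} [DecidableRel G.Adj] {F : Finset (Finset (Sym2 V))}
  {A : Finset V} {f g h k : Finset (Sym2 V)} {x₁ z₁ x₂ z₂ a b p q t : V}

namespace IsTwoCut

lemma swap_faces (hA : IsTwoCut G F A f g x₁ z₁ x₂ z₂) : IsTwoCut G F A g f x₁ z₁ x₂ z₂ :=
  ⟨hA.interedges_eq, hA.edges_ne, hA.right_mem, hA.left_mem, hA.faces_ne.symm, hA.fst_mem_right,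
    hA.snd_mem_right, hA.fst_mem_left, hA.snd_mem_left⟩

lemma swap_edges (hA : IsTwoCut G F A f g x₁ z₁ x₂ z₂) : IsTwoCut G F A f g x₂ z₂ x₁ z₁ :=
  ⟨by rw [hA.interedges_eq, Finset.pair_comm], hA.edges_ne.symm, hA.left_mem, hA.right_mem,
    hA.faces_ne, hA.snd_mem_left, hA.fst_mem_left, hA.snd_mem_right, hA.fst_mem_right⟩

lemma of_card_le (hF : IsCycleDoubleCover_s13 G F) (hA : #(G.interedges A Aᶜ) ≤ 2)
    (hxz : (x₁, z₁) ∈ G.interedges A Aᶜ) (hf : f ∈ F) (hg : g ∈ F) (hfg : f ≠ g)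
    (hxf : s(x₁, z₁) ∈ f) (hxg : s(x₁, z₁) ∈ g) :
    ∃ x₂ z₂, IsTwoCut G F A f g x₁ z₁ x₂ z₂ := by
  have hx := (G.mk_mem_interedges_iff).1 hxz
  have hcross {k} (hk : k ∈ F) (hxk : s(x₁, z₁) ∈ k) :
      ∃ d ∈ G.interedges A Aᶜ, s(d.1, d.2) ∈ k ∧ d ≠ (x₁, z₁) := by
    obtain ⟨a, ha, b, hb, habk, habx⟩ := (hF.isCycleEdges k hk).exists_crossing (A := A)
      (Finset.mem_coe.2 hx.1) (by simpa using hx.2.1) (left_mem_edgeSupport hxk)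
      (right_mem_edgeSupport hxk) s(x₁, z₁)
    refine ⟨(a, b), (G.mk_mem_interedges_iff).2
      ⟨ha, by simpa using hb, (hF.isCycleEdges k hk).adj habk⟩, habk, ?_⟩
    rintro ⟨⟩
    exact habx rfl
  obtain ⟨d, hd, hdf, hdx⟩ := hcross hf hxf
  obtain ⟨d', hd', hdg, hdx'⟩ := hcross hg hxg
  have heq : {(x₁, z₁), d} = G.interedges A Aᶜ := Finset.eq_of_subset_of_card_le
    (by simp [Finset.insert_subset_iff, hxz, hd]) (by rwa [Finset.card_pair hdx.symm])
  obtain rfl : d' = d := by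
    rw [← heq] at hd'
    simpa [hdx'] using hd'
  exact ⟨d'.1, d'.2, heq.symm, hdx.symm, hf, hg, hfg, hxf, hdf, hxg, hdg⟩

lemma fst_mem_interedges (hA : IsTwoCut G F A f g x₁ z₁ x₂ z₂) :
    x₁ ∈ A ∧ z₁ ∈ Aᶜ ∧ G.Adj x₁ z₁ := by
  rw [← SimpleGraph.mk_mem_interedges_iff, hA.interedges_eq]
  exact Finset.mem_insert_self _ _

lemma eq_or_eq_of_adj (hA : IsTwoCut G F A f g x₁ z₁ x₂ z₂) (ha : a ∈ A) (hb : b ∉ A)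
    (hab : G.Adj a b) : (a = x₁ ∧ b = z₁) ∨ (a = x₂ ∧ b = z₂) := by
  have h : (a, b) ∈ G.interedges A Aᶜ :=
    (G.mk_mem_interedges_iff).2 ⟨ha, Finset.mem_compl.2 hb, hab⟩
  simpa [hA.interedges_eq] using h

lemma mem_and_mem_of_adj (hA : IsTwoCut G F A f g x₁ z₁ x₂ z₂) (ha : a ∈ A) (hb : b ∉ A)
    (hab : G.Adj a b) : s(a, b) ∈ f ∧ s(a, b) ∈ g := by
  rcases hA.eq_or_eq_of_adj ha hb hab with ⟨rfl, rfl⟩ | ⟨rfl, rfl⟩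
  exacts [⟨hA.fst_mem_left, hA.fst_mem_right⟩, ⟨hA.snd_mem_left, hA.snd_mem_right⟩]

lemma eq_of_mem_of_mem (hA : IsTwoCut G F A f g x₁ z₁ x₂ z₂) (hF : IsCycleDoubleCover_s13 G F)
    (hG : G.IsRegularOfDegree 3) (hf : s(x₁, t) ∈ f) (hg : s(x₁, t) ∈ g) : t = z₁ := by
  by_contra ht
  exact hA.faces_ne (hF.eq_of_mem_of_mem hG hA.left_mem hA.right_mem ht hf hA.fst_mem_left hg
    hA.fst_mem_right)

lemma ne_fst_of_mem_of_mem (hA : IsTwoCut G F A f g x₁ z₁ x₂ z₂) (hF : IsCycleDoubleCover_s13 G F)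
    (hG : G.IsRegularOfDegree 3) (hp : p ∈ A) (hf : s(p, t) ∈ f) (hg : s(p, t) ∈ g) : t ≠ x₁ := by
  rintro rfl
  obtain rfl := hA.eq_of_mem_of_mem hF hG (Sym2.eq_swap ▸ hf) (Sym2.eq_swap ▸ hg)
  exact Finset.mem_compl.1 hA.fst_mem_interedges.2.1 hp

lemma ends_ne (hA : IsTwoCut G F A f g x₁ z₁ x₂ z₂) (hF : IsCycleDoubleCover_s13 G F)
    (hG : G.IsRegularOfDegree 3) : x₁ ≠ x₂ := by
  rintro rfl
  exact hA.edges_ne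
    (Prod.ext rfl (hA.eq_of_mem_of_mem hF hG hA.snd_mem_left hA.snd_mem_right).symm)

lemma fst_mem_cutRim (hA : IsTwoCut G F A f g x₁ z₁ x₂ z₂) : x₁ ∈ cutRim A f g :=
  Finset.mem_inter.2 ⟨hA.fst_mem_interedges.1,
    Finset.mem_union_left _ (left_mem_edgeSupport hA.fst_mem_left)⟩

lemma ends_subset_cutRim (hA : IsTwoCut G F A f g x₁ z₁ x₂ z₂) : {x₁, x₂} ⊆ cutRim A f g := by
  simp [Finset.insert_subset_iff, hA.fst_mem_cutRim, hA.swap_edges.fst_mem_cutRim]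

lemma ends_subset_inter (hA : IsTwoCut G F A f g x₁ z₁ x₂ z₂) :
    {x₁, x₂} ⊆ (A ∩ edgeSupport f) ∩ (A ∩ edgeSupport g) := by
  simp [Finset.insert_subset_iff, hA.fst_mem_interedges.1, hA.swap_edges.fst_mem_interedges.1,
    left_mem_edgeSupport hA.fst_mem_left, left_mem_edgeSupport hA.fst_mem_right,
    left_mem_edgeSupport hA.snd_mem_left, left_mem_edgeSupport hA.snd_mem_right]

lemma card_cutRim_le (hA : IsTwoCut G F A f g x₁ z₁ x₂ z₂) (hF : IsCycleDoubleCover_s13 G F)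
    (hG : G.IsRegularOfDegree 3) (hsmall : #(A ∩ edgeSupport f) + #(A ∩ edgeSupport g) ≤ 6) :
    #(cutRim A f g) ≤ 4 := by
  have hcard := Finset.card_le_card hA.ends_subset_inter
  rw [Finset.card_pair (hA.ends_ne hF hG)] at hcard
  have hsum := Finset.card_union_add_card_inter (A ∩ edgeSupport f) (A ∩ edgeSupport g)
  rw [cutRim, Finset.inter_union_distrib_left]
  omega

lemma card_cutRim_sdiff_le (hA : IsTwoCut G F A f g x₁ z₁ x₂ z₂) (hF : IsCycleDoubleCover_s13 G F)
    (hG : G.IsRegularOfDegree 3) (hsmall : #(A ∩ edgeSupport f) + #(A ∩ edgeSupport g) ≤ 6) :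
    #(cutRim A f g \ {x₁, x₂}) ≤ 2 := by
  rw [Finset.card_sdiff_of_subset hA.ends_subset_cutRim, Finset.card_pair (hA.ends_ne hF hG)]
  have := hA.card_cutRim_le hF hG hsmall
  omega

lemma not_isSpoke_fst (hA : IsTwoCut G F A f g x₁ z₁ x₂ z₂) (hF : IsCycleDoubleCover_s13 G F)
    (hG : G.IsRegularOfDegree 3) : ¬ IsSpoke G f g x₁ t := fun ⟨hadj, hnf, hng⟩ ↦
  (hF.mem_or_mem_of_adj hG hA.left_mem hA.right_mem hA.faces_ne
    (left_mem_edgeSupport hA.fst_mem_left) (left_mem_edgeSupport hA.fst_mem_right) hadj).elim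
    hnf hng

lemma mem_sdiff_or_mem_cutCore_of_isSpoke (hA : IsTwoCut G F A f g x₁ z₁ x₂ z₂)
    (hF : IsCycleDoubleCover_s13 G F) (hG : G.IsRegularOfDegree 3) (hp : p ∈ A)
    (hpt : IsSpoke G f g p t) : t ∈ cutRim A f g \ {x₁, x₂} ∨ t ∈ cutCore A f g := by
  have ht : t ∈ A := by
    by_contra ht
    exact hpt.2.1 (hA.mem_and_mem_of_adj hp ht hpt.1).1
  have h₁ : t ≠ x₁ := by
    rintro rfl
    exact hA.not_isSpoke_fst hF hG hpt.symm
  have h₂ : t ≠ x₂ := by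
    rintro rfl
    exact hA.swap_edges.not_isSpoke_fst hF hG hpt.symm
  grind [cutRim, cutCore]

lemma isSpoke_of_mem_interedges_cutCore (hA : IsTwoCut G F A f g x₁ z₁ x₂ z₂)
    (hF : IsCycleDoubleCover_s13 G F) (hG : G.IsRegularOfDegree 3)
    (htp : (t, p) ∈ G.interedges (cutCore A f g) (cutCore A f g)ᶜ) :
    p ∈ cutRim A f g \ {x₁, x₂} ∧ IsSpoke G f g p t := by
  obtain ⟨ht, hp, hadj⟩ := (G.mk_mem_interedges_iff).1 htp
  obtain ⟨htA, htfg⟩ := Finset.mem_sdiff.1 ht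
  rw [Finset.notMem_union] at htfg
  have hspoke : IsSpoke G f g t p :=
    ⟨hadj, fun h ↦ htfg.1 (left_mem_edgeSupport h), fun h ↦ htfg.2 (left_mem_edgeSupport h)⟩
  exact ⟨(hA.mem_sdiff_or_mem_cutCore_of_isSpoke hF hG htA hspoke).resolve_right
    (Finset.mem_compl.1 hp), hspoke.symm⟩

lemma notMem_inter_of_mem_sdiff (hA : IsTwoCut G F A f g x₁ z₁ x₂ z₂)
    (hF : IsCycleDoubleCover_s13 G F) (hG : G.IsRegularOfDegree 3)
    (hsmall : #(A ∩ edgeSupport f) + #(A ∩ edgeSupport g) ≤ 6)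
    (hp : p ∈ cutRim A f g \ {x₁, x₂}) : p ∉ edgeSupport f ∩ edgeSupport g := by
  intro hpfg
  have hp' : p ∈ A ∧ p ≠ x₁ ∧ p ≠ x₂ := by grind [cutRim]
  obtain ⟨hpA, hp₁, hp₂⟩ := hp'
  obtain ⟨hpf, hpg⟩ := Finset.mem_inter.1 hpfg
  obtain ⟨w, hwf, hwg⟩ := hF.exists_mem_of_mem_edgeSupport hG hA.left_mem hA.right_mem hpf hpg
  have hadj := (hF.isCycleEdges f hA.left_mem).adj hwf
  have hwA : w ∈ A := by
    by_contra hwA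
    rcases hA.eq_or_eq_of_adj hpA hwA hadj with h | h
    exacts [hp₁ h.1, hp₂ h.1]
  have hw₁ := hA.ne_fst_of_mem_of_mem hF hG hpA hwf hwg
  have hw₂ := hA.swap_edges.ne_fst_of_mem_of_mem hF hG hpA hwf hwg
  have hpw : {p, w} ⊆ (A ∩ edgeSupport f ∩ (A ∩ edgeSupport g)) \ {x₁, x₂} := by
    grind [right_mem_edgeSupport hwf, right_mem_edgeSupport hwg]
  have hcard := Finset.card_le_card hpw
  rw [Finset.card_pair hadj.ne, Finset.card_sdiff_of_subset hA.ends_subset_inter,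
    Finset.card_pair (hA.ends_ne hF hG)] at hcard
  have hf : #(A ∩ edgeSupport f ∩ (A ∩ edgeSupport g)) ≤ #(A ∩ edgeSupport f) :=
    Finset.card_le_card Finset.inter_subset_left
  have hg : #(A ∩ edgeSupport f ∩ (A ∩ edgeSupport g)) ≤ #(A ∩ edgeSupport g) :=
    Finset.card_le_card Finset.inter_subset_right
  omega

lemma exists_adj_mem_sdiff (hA : IsTwoCut G F A f g x₁ z₁ x₂ z₂) (hF : IsCycleDoubleCover_s13 G F)
    (hG : G.IsRegularOfDegree 3) : ∃ p ∈ cutRim A f g \ {x₁, x₂}, G.Adj x₁ p := by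
  obtain ⟨p, hp, hpzx⟩ : ∃ p ∈ G.neighborFinset x₁, p ∉ ({z₁, x₂} : Finset V) := by
    refine Finset.exists_mem_notMem_of_card_lt_card (Finset.card_le_two.trans_lt ?_)
    rw [G.card_neighborFinset_eq_degree, hG.degree_eq]
    norm_num
  rw [SimpleGraph.mem_neighborFinset] at hp
  have hpA : p ∈ A := by
    by_contra hpA
    have := hA.eq_or_eq_of_adj hA.fst_mem_interedges.1 hpA hp
    grind [hA.ends_ne hF hG]
  have hpfg : p ∈ edgeSupport f ∪ edgeSupport g := Finset.mem_union.2 <|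
    (hF.mem_or_mem_of_adj hG hA.left_mem hA.right_mem hA.faces_ne
      (left_mem_edgeSupport hA.fst_mem_left) (left_mem_edgeSupport hA.fst_mem_right) hp).imp
      right_mem_edgeSupport right_mem_edgeSupport
  exact ⟨p, by grind [cutRim, hp.ne], hp⟩

lemma existsUnique_isSpoke (hA : IsTwoCut G F A f g x₁ z₁ x₂ z₂) (hF : IsCycleDoubleCover_s13 G F)
    (hG : G.IsRegularOfDegree 3) (hsmall : #(A ∩ edgeSupport f) + #(A ∩ edgeSupport g) ≤ 6)
    (hp : p ∈ cutRim A f g \ {x₁, x₂}) : ∃! t, IsSpoke G f g p t := by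
  wlog hpf : p ∈ edgeSupport f generalizing f g
  · simp only [isSpoke_faces_comm (f := f)]
    exact this hA.swap_faces (by omega) (by rwa [cutRim, Finset.union_comm]) (by grind [cutRim])
  have hpg : p ∉ edgeSupport g := fun hpg ↦
    hA.notMem_inter_of_mem_sdiff hF hG hsmall hp (Finset.mem_inter.2 ⟨hpf, hpg⟩)
  have hcard : #(G.neighborFinset p \ edgeNeighbors f p) = 1 := by
    rw [Finset.card_sdiff_of_subset ((hF.isCycleEdges f hA.left_mem).edgeNeighbors_subset p),
      G.card_neighborFinset_eq_degree, hG.degree_eq,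
      (hF.isCycleEdges f hA.left_mem).card_edgeNeighbors hpf]
  have hmem (t : V) : t ∈ G.neighborFinset p \ edgeNeighbors f p ↔ IsSpoke G f g p t := by
    have htg : s(p, t) ∉ g := fun h ↦ hpg (left_mem_edgeSupport h)
    simp [IsSpoke, htg]
  obtain ⟨t, ht⟩ := Finset.card_eq_one.1 hcard
  refine ⟨t, (hmem t).1 (by simp [ht]), fun t' ht' ↦ ?_⟩
  simpa [ht] using (hmem t').2 ht'

lemma card_interedges_cutCore_le (hA : IsTwoCut G F A f g x₁ z₁ x₂ z₂)
    (hF : IsCycleDoubleCover_s13 G F) (hG : G.IsRegularOfDegree 3)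
    (hsmall : #(A ∩ edgeSupport f) + #(A ∩ edgeSupport g) ≤ 6) :
    #(G.interedges (cutCore A f g) (cutCore A f g)ᶜ) ≤ 2 := by
  have hspoke (d : V × V) (hd : d ∈ G.interedges (cutCore A f g) (cutCore A f g)ᶜ) :=
    hA.isSpoke_of_mem_interedges_cutCore hF hG (t := d.1) (p := d.2) hd
  refine (Finset.card_le_card_of_injOn Prod.snd (fun d hd ↦ (hspoke d hd).1) ?_).trans
    (hA.card_cutRim_sdiff_le hF hG hsmall)
  intro d hd d' hd' heq
  obtain ⟨hp, hdp⟩ := hspoke d hd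
  refine Prod.ext ((hA.existsUnique_isSpoke hF hG hsmall hp).unique hdp ?_) heq
  exact heq ▸ (hspoke d' hd').2

lemma fst_mem_union_of_forall_mem (hA : IsTwoCut G F A f g x₁ z₁ x₂ z₂)
    (hF : IsCycleDoubleCover_s13 G F) (hG : G.IsRegularOfDegree 3) (hh : h ∈ F) (hk : k ∈ F)
    (hhk : h ≠ k) (hspoke : ∀ p ∈ cutRim A f g \ {x₁, x₂}, ∃ t, s(p, t) ∈ h ∧ s(p, t) ∈ k) :
    x₁ ∈ edgeSupport h ∪ edgeSupport k := by
  obtain ⟨p, hp, hadj⟩ := hA.exists_adj_mem_sdiff hF hG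
  obtain ⟨t, hth, htk⟩ := hspoke p hp
  obtain ⟨j, hj, hxj, htj⟩ := hF.exists_mem_and_mem_of_adj hG hadj.symm
    ((hF.isCycleEdges h hh).adj hth)
  rcases hF.eq_or_eq_of_mem_s13 hh hk hj hhk hth htk htj with rfl | rfl
  exacts [Finset.mem_union_left _ (right_mem_edgeSupport hxj),
    Finset.mem_union_right _ (right_mem_edgeSupport hxj)]

lemma fst_notMem_inter_of_isSpoke (hA : IsTwoCut G F A f g x₁ z₁ x₂ z₂)
    (hF : IsCycleDoubleCover_s13 G F) (hG : G.IsRegularOfDegree 3) (hh : h ∈ F) (hk : k ∈ F)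
    (hhk : h ≠ k) (hpt : IsSpoke G f g p t) (hth : s(p, t) ∈ h) (htk : s(p, t) ∈ k) :
    x₁ ∉ edgeSupport h ∩ edgeSupport k := by
  intro hx
  obtain ⟨hxh, hxk⟩ := Finset.mem_inter.1 hx
  have hnot {j} (hj : j ∈ F) (htj : s(p, t) ∈ j) : s(x₁, z₁) ∉ j := fun hzj ↦
    (hF.eq_or_eq_of_mem_s13 hA.left_mem hA.right_mem hj hA.faces_ne hA.fst_mem_left
      hA.fst_mem_right hzj).elim (hpt.ne_of_mem htj).1 (hpt.ne_of_mem htj).2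
  exact (hF.mem_or_mem_of_adj hG hh hk hhk hxh hxk hA.fst_mem_interedges.2.2).elim
    (hnot hh hth) (hnot hk htk)

lemma cutRim_sdiff_eq_pair (hA : IsTwoCut G F A f g x₁ z₁ x₂ z₂)
    (hF : IsCycleDoubleCover_s13 G F) (hG : G.IsRegularOfDegree 3)
    (hsmall : #(A ∩ edgeSupport f) + #(A ∩ edgeSupport g) ≤ 6) (hpq : p ≠ q)
    (hp : p ∈ cutRim A f g \ {x₁, x₂}) (hq : q ∈ cutRim A f g \ {x₁, x₂}) :
    cutRim A f g \ {x₁, x₂} = {p, q} :=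
  (Finset.eq_of_subset_of_card_le (by simp only [Finset.insert_subset_iff,
    Finset.singleton_subset_iff, hp, hq, and_self]) (by
    rw [Finset.card_pair hpq]
    exact hA.card_cutRim_sdiff_le hF hG hsmall)).symm

lemma six_le_card_cutRim_inter (hA : IsTwoCut G F A f g x₁ z₁ x₂ z₂)
    (hF : IsCycleDoubleCover_s13 G F) (hG : G.IsRegularOfDegree 3)
    (hpq : p ≠ q) (hrim : cutRim A f g \ {x₁, x₂} = {p, q})
    (hh : h ∈ F) (hk : k ∈ F) (hhk : h ≠ k) (hph : s(p, a) ∈ h) (hpk : s(p, a) ∈ k)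
    (hqh : s(q, b) ∈ h) (hqk : s(q, b) ∈ k) :
    6 ≤ #(cutRim A f g ∩ edgeSupport h) + #(cutRim A f g ∩ edgeSupport k) := by
  set R := cutRim A f g
  have hspoke : ∀ r ∈ R \ {x₁, x₂}, ∃ t, s(r, t) ∈ h ∧ s(r, t) ∈ k := by
    rw [hrim]
    simp only [Finset.mem_insert, Finset.mem_singleton, forall_eq_or_imp, forall_eq]
    exact ⟨⟨a, hph, hpk⟩, ⟨b, hqh, hqk⟩⟩
  have hx₁ := hA.fst_mem_union_of_forall_mem hF hG hh hk hhk hspoke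
  have hx₂ := hA.swap_edges.fst_mem_union_of_forall_mem hF hG hh hk hhk
    (by rwa [Finset.pair_comm])
  have hunion : R ∩ edgeSupport h ∪ R ∩ edgeSupport k = R := by
    rw [← Finset.inter_union_distrib_left, Finset.inter_eq_left]
    intro r hr
    by_cases hrx : r ∈ ({x₁, x₂} : Finset V)
    · rcases (by simpa using hrx : r = x₁ ∨ r = x₂) with rfl | rfl <;> assumption
    · obtain ⟨t, hth, -⟩ := hspoke r (Finset.mem_sdiff.2 ⟨hr, hrx⟩)
      exact Finset.mem_union_left _ (left_mem_edgeSupport hth)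
  have hinter : {p, q} ⊆ (R ∩ edgeSupport h) ∩ (R ∩ edgeSupport k) := by
    rw [← hrim]
    intro r hr
    obtain ⟨t, hth, htk⟩ := hspoke r hr
    have hrR := (Finset.mem_sdiff.1 hr).1
    exact Finset.mem_inter.2 ⟨Finset.mem_inter.2 ⟨hrR, left_mem_edgeSupport hth⟩,
      Finset.mem_inter.2 ⟨hrR, left_mem_edgeSupport htk⟩⟩
  have hR : #R = 4 := by
    rw [← Finset.card_sdiff_add_card_eq_card hA.ends_subset_cutRim, hrim, Finset.card_pair hpq,
      Finset.card_pair (hA.ends_ne hF hG)]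
  have hcard := Finset.card_le_card hinter
  rw [Finset.card_pair hpq] at hcard
  have := Finset.card_union_add_card_inter (R ∩ edgeSupport h) (R ∩ edgeSupport k)
  rw [hunion] at this
  omega

/- The rim takes up six of the at most twelve places on the two faces through both spokes. -/
lemma card_cutCore_inter_le (hA : IsTwoCut G F A f g x₁ z₁ x₂ z₂)
    (hF : IsCycleDoubleCover_s13 G F) (hG : G.IsRegularOfDegree 3) (hsize : ∀ f ∈ F, #f ≤ 6)
    (hsmall : #(A ∩ edgeSupport f) + #(A ∩ edgeSupport g) ≤ 6)
    (hC : IsTwoCut G F (cutCore A f g) h k a p b q) :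
    #(cutCore A f g ∩ edgeSupport h) + #(cutCore A f g ∩ edgeSupport k) ≤ 6 := by
  obtain ⟨hp, hpa⟩ := hA.isSpoke_of_mem_interedges_cutCore hF hG
    ((G.mk_mem_interedges_iff).2 hC.fst_mem_interedges)
  obtain ⟨hq, hqb⟩ := hA.isSpoke_of_mem_interedges_cutCore hF hG
    ((G.mk_mem_interedges_iff).2 hC.swap_edges.fst_mem_interedges)
  have hpq : p ≠ q := by
    rintro rfl
    exact hC.ends_ne hF hG ((hA.existsUnique_isSpoke hF hG hsmall hp).unique hpa hqb)
  have hrim := hA.six_le_card_cutRim_inter hF hG hpq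
    (hA.cutRim_sdiff_eq_pair hF hG hsmall hpq hp hq) hC.left_mem hC.right_mem hC.faces_ne
    (Sym2.eq_swap ▸ hC.fst_mem_left) (Sym2.eq_swap ▸ hC.fst_mem_right)
    (Sym2.eq_swap ▸ hC.snd_mem_left) (Sym2.eq_swap ▸ hC.snd_mem_right)
  have hface {j} (hj : j ∈ F) :
      #(cutRim A f g ∩ edgeSupport j) + #(cutCore A f g ∩ edgeSupport j) ≤ 6 := by
    have hdisj : Disjoint (cutRim A f g) (cutCore A f g) :=
      Finset.disjoint_sdiff.mono_left Finset.inter_subset_right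
    rw [← Finset.card_union_of_disjoint (hdisj.mono Finset.inter_subset_left
      Finset.inter_subset_left), ← Finset.union_inter_distrib_right]
    exact (Finset.card_le_card Finset.inter_subset_right).trans
      ((hF.isCycleEdges j hj).card_edgeSupport.trans_le (hsize j hj))
  have := hface hC.left_mem
  have := hface hC.right_mem
  omega

lemma mem_and_mem_of_cutRim_eq (hA : IsTwoCut G F A f g x₁ z₁ x₂ z₂)
    (hF : IsCycleDoubleCover_s13 G F) (hG : G.IsRegularOfDegree 3)
    (hsmall : #(A ∩ edgeSupport f) + #(A ∩ edgeSupport g) ≤ 6)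
    (hrim : cutRim A f g \ {x₁, x₂} = {p, t}) (hpt : IsSpoke G f g p t)
    (ha : a ∈ cutRim A f g) (hb : b ∉ cutRim A f g) (hab : G.Adj a b) :
    s(a, b) ∈ f ∧ s(a, b) ∈ g := by
  have haA := (Finset.mem_inter.1 ha).1
  refine hA.mem_and_mem_of_adj haA (fun hbA ↦ ?_) hab
  have hspoke : IsSpoke G f g a b := by
    refine ⟨hab, fun habf ↦ hb ?_, fun habg ↦ hb ?_⟩
    · exact Finset.mem_inter.2 ⟨hbA, Finset.mem_union_left _ (right_mem_edgeSupport habf)⟩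
    · exact Finset.mem_inter.2 ⟨hbA, Finset.mem_union_right _ (right_mem_edgeSupport habg)⟩
  have ha' : a ∈ cutRim A f g \ {x₁, x₂} := by
    refine Finset.mem_sdiff.2 ⟨ha, fun hax ↦ ?_⟩
    rcases (by simpa using hax : a = x₁ ∨ a = x₂) with rfl | rfl
    exacts [hA.not_isSpoke_fst hF hG hspoke, hA.swap_edges.not_isSpoke_fst hF hG hspoke]
  have huniq {r : V} (hr : IsSpoke G f g a r) : b = r :=
    (hA.existsUnique_isSpoke hF hG hsmall ha').unique hspoke hr
  have hpt_rim : {p, t} ⊆ cutRim A f g := hrim ▸ Finset.sdiff_subset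
  rw [Finset.insert_subset_iff, Finset.singleton_subset_iff] at hpt_rim
  rw [hrim] at ha'
  rcases (by simpa using ha' : a = p ∨ a = t) with rfl | rfl
  exacts [hb ((huniq hpt).symm ▸ hpt_rim.2), hb ((huniq hpt.symm).symm ▸ hpt_rim.1)]

/- Otherwise the two faces through `pt` would lie in the rim, which is too small for them. -/
lemma not_isSpoke_of_mem_sdiff (hA : IsTwoCut G F A f g x₁ z₁ x₂ z₂)
    (hF : IsCycleDoubleCover_s13 G F) (hG : G.IsRegularOfDegree 3) (hsize : ∀ f ∈ F, 4 ≤ #f)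
    (hsmall : #(A ∩ edgeSupport f) + #(A ∩ edgeSupport g) ≤ 6)
    (hp : p ∈ cutRim A f g \ {x₁, x₂}) (ht : t ∈ cutRim A f g \ {x₁, x₂}) :
    ¬ IsSpoke G f g p t := by
  intro hpt
  have hrim := hA.cutRim_sdiff_eq_pair hF hG hsmall hpt.1.ne hp ht
  obtain ⟨h, hh, k, hk, hhk, hth, htk⟩ := hF.exists_ne_of_adj hpt.1
  have hconfined {j} (hj : j ∈ F) (htj : s(p, t) ∈ j) : edgeSupport j ⊆ cutRim A f g := by
    intro v hv
    by_contra hvR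
    obtain ⟨a, ha, b, hb, habj, -⟩ := (hF.isCycleEdges j hj).exists_crossing
      (A := cutRim A f g) (Finset.mem_sdiff.1 hp).1 hvR (left_mem_edgeSupport htj) hv s(p, t)
    obtain ⟨habf, habg⟩ := hA.mem_and_mem_of_cutRim_eq hF hG hsmall hrim hpt ha hb
      ((hF.isCycleEdges j hj).adj habj)
    exact (hF.eq_or_eq_of_mem_s13 hA.left_mem hA.right_mem hj hA.faces_ne habf habg habj).elim
      (hpt.ne_of_mem htj).1 (hpt.ne_of_mem htj).2
  have hunion : #(edgeSupport h ∪ edgeSupport k) ≤ 4 :=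
    (Finset.card_le_card (Finset.union_subset (hconfined hh hth) (hconfined hk htk))).trans
      (hA.card_cutRim_le hF hG hsmall)
  have hinter : #(edgeSupport h ∩ edgeSupport k) ≤ 2 := by
    refine (Finset.card_le_card fun v hv ↦ ?_).trans (hA.card_cutRim_sdiff_le hF hG hsmall)
    refine Finset.mem_sdiff.2 ⟨hconfined hh hth (Finset.mem_inter.1 hv).1, fun hvx ↦ ?_⟩
    rcases (by simpa using hvx : v = x₁ ∨ v = x₂) with rfl | rfl
    exacts [hA.fst_notMem_inter_of_isSpoke hF hG hh hk hhk hpt hth htk hv,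
      hA.swap_edges.fst_notMem_inter_of_isSpoke hF hG hh hk hhk hpt hth htk hv]
  have hsum := Finset.card_union_add_card_inter (edgeSupport h) (edgeSupport k)
  rw [(hF.isCycleEdges h hh).card_edgeSupport, (hF.isCycleEdges k hk).card_edgeSupport] at hsum
  have := hsize h hh
  have := hsize k hk
  omega

theorem lt_card (hA : IsTwoCut G F A f g x₁ z₁ x₂ z₂) (hF : IsCycleDoubleCover_s13 G F)
    (hG : G.IsRegularOfDegree 3) (hsize : ∀ f ∈ F, 4 ≤ #f ∧ #f ≤ 6) :
    6 < #(A ∩ edgeSupport f) + #(A ∩ edgeSupport g) := by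
  induction A using Finset.strongInduction generalizing f g x₁ z₁ x₂ z₂ with
  | H A ih =>
  by_contra! hsmall
  obtain ⟨p, hp, -⟩ := hA.exists_adj_mem_sdiff hF hG
  obtain ⟨hpR, -⟩ := Finset.mem_sdiff.1 hp
  obtain ⟨t, hpt, -⟩ := hA.existsUnique_isSpoke hF hG hsmall hp
  rcases hA.mem_sdiff_or_mem_cutCore_of_isSpoke hF hG (Finset.mem_inter.1 hpR).1 hpt with ht | ht
  · exact hA.not_isSpoke_of_mem_sdiff hF hG (fun f hf ↦ (hsize f hf).1) hsmall hp ht hpt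
  · obtain ⟨h, hh, k, hk, hhk, hth, htk⟩ := hF.exists_ne_of_adj hpt.1.symm
    have hpC : p ∉ cutCore A f g := fun h ↦
      (Finset.mem_sdiff.1 h).2 (Finset.mem_inter.1 hpR).2
    obtain ⟨u, q, hC⟩ := of_card_le hF (hA.card_interedges_cutCore_le hF hG hsmall)
      ((G.mk_mem_interedges_iff).2 ⟨ht, Finset.mem_compl.2 hpC, hpt.1.symm⟩) hh hk hhk hth htk
    have hss : cutCore A f g ⊂ A :=
      (Finset.ssubset_iff_of_subset Finset.sdiff_subset).2 ⟨p, (Finset.mem_inter.1 hpR).1, hpC⟩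
    exact (ih _ hss hC).not_ge
      (hA.card_cutCore_inter_le hF hG (fun f hf ↦ (hsize f hf).2) hsmall hC)

end IsTwoCut

theorem IsCycleDoubleCover_s13.isEdgeConnected_three (hF : IsCycleDoubleCover_s13 G F)
    (hconn : G.Connected) (hG : G.IsRegularOfDegree 3) (hsize : ∀ f ∈ F, 4 ≤ #f ∧ #f ≤ 6) :
    G.IsEdgeConnected 3 := by
  refine isEdgeConnected_iff_le_card_interedges.2 fun A ⟨u, hu⟩ ⟨v, hv⟩ ↦ ?_
  by_contra! hcard
  obtain ⟨x, hx, z, hz, hxz⟩ := reachable_iff_forall_exists_adj.1 (hconn.preconnected u v) A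
    (Finset.mem_coe.2 hu) (by simpa using hv)
  obtain ⟨f, hf, g, hg, hfg, hxf, hxg⟩ := hF.exists_ne_of_adj hxz
  have hmem : (x, z) ∈ G.interedges A Aᶜ :=
    (G.mk_mem_interedges_iff).2 ⟨hx, Finset.mem_compl.2 hz, hxz⟩
  obtain ⟨_, _, hA⟩ := IsTwoCut.of_card_le hF (Nat.le_of_lt_succ hcard) hmem hf hg hfg hxf hxg
  have : Std.Symm G.Adj := G.symm
  have hcomm : #(G.interedges A Aᶜ) = #(G.interedges Aᶜ Aᶜᶜ) := by
    rw [compl_compl]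
    exact Rel.card_interedges_comm A Aᶜ
  obtain ⟨_, _, hA'⟩ := IsTwoCut.of_card_le hF (A := Aᶜ) (x₁ := z) (z₁ := x)
    (hcomm ▸ Nat.le_of_lt_succ hcard)
    (by rw [compl_compl]; exact (G.mk_mem_interedges_comm).1 hmem) hf hg hfg
    (Sym2.eq_swap ▸ hxf) (Sym2.eq_swap ▸ hxg)
  have hsplit {j} (hj : j ∈ F) : #(A ∩ edgeSupport j) + #(Aᶜ ∩ edgeSupport j) ≤ 6 := by
    rw [← Finset.card_union_of_disjoint (disjoint_compl_right.mono Finset.inter_subset_left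
      Finset.inter_subset_left), ← Finset.union_inter_distrib_right, Finset.union_compl,
      Finset.univ_inter, (hF.isCycleEdges j hj).card_edgeSupport]
    exact (hsize j hj).2
  have := hA.lt_card hF hG hsize
  have := hA'.lt_card hF hG hsize
  have := hsplit hf
  have := hsplit hg
  omega

end TwoCut

theorem fullerene_three_connected_general {V : Type*} [Fintype V] [DecidableEq V]
    {G : SimpleGraph V} [DecidableRel G.Adj] {F : Finset (Finset (Sym2 V))}
    (hconn : G.Connected) (hG : G.IsRegularOfDegree 3) (hF : IsCycleDoubleCover_s13 G F)
    (hsize : ∀ f ∈ F, 4 ≤ #f ∧ #f ≤ 6) :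
    3 < Fintype.card V ∧
      ∀ s : Finset V, #s ≤ 2 → (G.induce (s : Set V)ᶜ).Connected := by
  obtain ⟨v⟩ := hconn.nonempty
  have hcard : 3 < Fintype.card V := hG.degree_eq v ▸ G.degree_lt_card_verts v
  refine ⟨hcard, fun s hs ↦ ?_⟩
  refine induce_compl_connected_of_isEdgeConnected (fun v ↦ (hG.degree_eq v).le)
    (hF.isEdgeConnected_three hconn hG hsize) (Nat.lt_succ_of_le hs) ?_
  rw [← Finset.card_pos, Finset.card_compl]
  omega

/-- Every fullerene graph is `3`-connected: it has more than `3` vertices and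
removing any set of at most `2` vertices leaves it connected. -/
theorem fullerene_three_connected {V : Type*} [Fintype V] [DecidableEq V]
    (G : SimpleGraph V) [DecidableRel G.Adj] (F : Finset (Finset (Sym2 V)))
    (hG : IsFullerene G F) :
    3 < Fintype.card V ∧
      ∀ s : Finset V, s.card ≤ 2 → (G.induce ((↑s : Set V)ᶜ)).Connected := by
  refine fullerene_three_connected_general hG.connected hG.cubic
    ⟨hG.face_cycle, hG.edge_faces⟩ fun f hf ↦ ?_
  have := hG.face_size f hf
  omega
end

section
/- The graph consisting of a 6-cycle a b c d e f together with a vertex x adjacent to all six cycle vertices admits a proper list coloring whenever the lists satisfy: |L(a)|, |L(b)|, |L(c)|, |L(d)|, |L(e)| ≥ 2, |L(f)| ≥ 3, and L(x) = {1,2,3,4,5}, with all lists subsets of {1,2,3,4,5}. -/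
/-- The wheel `W₆`: a 6-cycle `0 1 2 3 4 5` (representing `a b c d e f`)
together with a hub vertex `6` (representing `x`) adjacent to all six cycle
vertices. -/
def wheel6 : SimpleGraph (Fin 7) :=
  SimpleGraph.fromRel (fun u v =>
    v = 6 ∨ (u.val < 6 ∧ v.val < 6 ∧ v.val = (u.val + 1) % 6))

/-!
It suffices to color the hexagon with at most four colors: the hub then has a spare one. The lists
lie in a set of five colors, so by counting some color `r` lies in two of the lists at the vertices
`0, 2, 4`. If `r` lies in all the lists at `1, 3, 5`, use it there and avoid it at `0, 2, 4`.
Otherwise, by counting again, some `s ≠ r` lies in two of the lists at `1, 3, 5`. Using `r` twice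
and `s` twice leaves one vertex in each class, and any proper choice there uses at most four
colors. Such a choice can only fail if these two vertices are adjacent and have the lists `{s, t}`
and `{r, t}`, and then a few vertices are recolored.
-/

open Finset SimpleGraph

/-- `G` has a proper coloring from the lists `L` that uses at most `n` colors; the colors used are
recorded by a palette `P`, so that no finiteness of the vertex set is needed. -/
def ListColorableWith {V α : Type*} (G : SimpleGraph V) (L : V → Finset α) (n : ℕ) : Prop :=
  ∃ C : G.Coloring α, (∀ v, C v ∈ L v) ∧ ∃ P : Finset α, #P ≤ n ∧ ∀ v, C v ∈ P

namespace ListColorableWith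

theorem of_iso {V W α : Type*} {G : SimpleGraph V} {H : SimpleGraph W}
    {L : W → Finset α} {n : ℕ} (e : G ≃g H) (h : ListColorableWith G (L ∘ e) n) :
    ListColorableWith H L n := by
  obtain ⟨C, hCL, P, hP, hCP⟩ := h
  refine ⟨C.comp e.symm.toHom, fun v => ?_, P, hP, fun v => hCP (e.symm v)⟩
  simpa using hCL (e.symm v)

end ListColorableWith

/-- The reflection `u ↦ i - u` of a cycle. -/
def cycleGraphReflection {n : ℕ} (i : Fin (n + 2)) : cycleGraph (n + 2) ≃g cycleGraph (n + 2) where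
  toEquiv := Equiv.subLeft i
  map_rel_iff' {u v} := by simp [cycleGraph_adj, or_comm]

section Lists

variable {α : Type*}

theorem exists_mem_ne_ne {A : Finset α} (hA : 3 ≤ #A) (r s : α) : ∃ x ∈ A, x ≠ r ∧ x ≠ s := by
  classical
  obtain ⟨x, hx, hxrs⟩ :=
    exists_mem_notMem_of_card_lt_card ((card_le_two : #{r, s} ≤ 2).trans_lt hA)
  exact ⟨x, hx, by simpa using hxrs⟩

theorem exists_mem_ne_ne_or_mem_mem {A : Finset α} (hA : 2 ≤ #A) (r s : α) :
    (∃ x ∈ A, x ≠ r ∧ x ≠ s) ∨ (r ∈ A ∧ s ∈ A) := by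
  by_contra! h
  obtain ⟨x, hx, hxr⟩ := exists_mem_ne hA r
  obtain ⟨y, hy, hys⟩ := exists_mem_ne hA s
  grind

theorem exists_distinct_mem_or {A B : Finset α} (hA : 2 ≤ #A) (hB : 2 ≤ #B) (r s : α) :
    (∃ a ∈ A, ∃ b ∈ B, a ≠ r ∧ b ≠ s ∧ a ≠ b) ∨
      ∃ t, t ≠ r ∧ t ≠ s ∧ r ∈ A ∧ t ∈ A ∧ s ∈ B ∧ t ∈ B := by
  obtain ⟨t, htA, htr⟩ := exists_mem_ne hA r
  obtain ⟨b, hb, hbs⟩ := exists_mem_ne hB s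
  have hA' := exists_mem_ne_ne_or_mem_mem hA r t
  have hB' := exists_mem_ne_ne_or_mem_mem hB s t
  grind

theorem exists_mem_inter_of_card_lt [DecidableEq α] {S A B C : Finset α}
    (hA : A ⊆ S) (hB : B ⊆ S) (hC : C ⊆ S) (h : #S < #A + #B + #C) :
    ∃ x, x ∈ A ∩ B ∨ x ∈ A ∩ C ∨ x ∈ B ∩ C := by
  by_contra! hx
  simp only [mem_inter, not_and] at hx
  have hAB : Disjoint A B := Finset.disjoint_left.2 (hx · |>.1)
  have hABC : Disjoint (A ∪ B) C := disjoint_union_left.2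
    ⟨Finset.disjoint_left.2 (hx · |>.2.1), Finset.disjoint_left.2 (hx · |>.2.2)⟩
  have hS : #(A ∪ B ∪ C) ≤ #S := card_le_card (union_subset (union_subset hA hB) hC)
  rw [card_union_of_disjoint hABC, card_union_of_disjoint hAB] at hS
  omega

theorem exists_ne_mem_inter_of_card_lt [DecidableEq α] {S A B C : Finset α}
    (hA : A ⊆ S) (hB : B ⊆ S) (hC : C ⊆ S) (h : #S + 1 < #A + #B + #C)
    {r : α} (hr : r ∉ A ∩ B ∩ C) :
    ∃ s ≠ r, s ∈ A ∩ B ∨ s ∈ A ∩ C ∨ s ∈ B ∩ C := by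
  -- `r` lies in at most two of `A`, `B`, `C`, so erasing it costs at most two on the right.
  have hcard : #(S.erase r) < #(A.erase r) + #(B.erase r) + #(C.erase r) := by
    grind [card_erase_eq_ite]
  obtain ⟨s, hs⟩ := exists_mem_inter_of_card_lt (erase_subset_erase r hA)
    (erase_subset_erase r hB) (erase_subset_erase r hC) hcard
  exact ⟨s, by grind, by grind⟩

end Lists

namespace ListColorableWith

variable {α : Type*} {L : Fin 6 → Finset α} {r s : α}

theorem hexagon_of_palette [DecidableEq α] (φ : Fin 6 → α) (p q u v : α)
    (hL : ∀ i, φ i ∈ L i) (hφ : ∀ i, φ i ≠ φ (i + 1))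
    (hP : ∀ i, φ i ∈ ({p, q, u, v} : Finset α)) :
    ListColorableWith (cycleGraph 6) L 4 := by
  refine ⟨Coloring.mk φ fun {i j} hij => ?_, hL, _, card_le_four, hP⟩
  rcases cycleGraph_adj.1 hij with h | h
  · rw [← sub_add_cancel i j, h, add_comm]
    exact (hφ j).symm
  · rw [← sub_add_cancel j i, h, add_comm]
    exact hφ i

theorem hexagon_of_mem_one_three_five (h0 : 2 ≤ #(L 0)) (h2 : 2 ≤ #(L 2)) (h4 : 2 ≤ #(L 4))
    (hr1 : r ∈ L 1) (hr3 : r ∈ L 3) (hr5 : r ∈ L 5) : ListColorableWith (cycleGraph 6) L 4 := by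
  classical
  obtain ⟨a, ha, har⟩ := exists_mem_ne h0 r
  obtain ⟨c, hc, hcr⟩ := exists_mem_ne h2 r
  obtain ⟨e, he, her⟩ := exists_mem_ne h4 r
  apply hexagon_of_palette ![a, r, c, r, e, r] a c e r <;>
    simp [Fin.forall_fin_succ, *, Ne.symm]

theorem hexagon_of_mem_two_four_one_three (h0 : 2 ≤ #(L 0)) (h5 : 3 ≤ #(L 5)) (hrs : r ≠ s)
    (hr2 : r ∈ L 2) (hr4 : r ∈ L 4) (hs1 : s ∈ L 1) (hs3 : s ∈ L 3) :
    ListColorableWith (cycleGraph 6) L 4 := by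
  classical
  obtain ⟨a, ha, has⟩ := exists_mem_ne h0 s
  obtain ⟨f, hf, hfr, hfa⟩ := exists_mem_ne_ne h5 r a
  apply hexagon_of_palette ![a, s, r, s, r, f] a r s f <;>
    simp [Fin.forall_fin_succ, *, Ne.symm]

theorem hexagon_of_mem_two_four_one_five (h0 : 2 ≤ #(L 0)) (h3 : 2 ≤ #(L 3)) (hrs : r ≠ s)
    (hr2 : r ∈ L 2) (hr4 : r ∈ L 4) (hs1 : s ∈ L 1) (hs5 : s ∈ L 5) :
    ListColorableWith (cycleGraph 6) L 4 := by
  classical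
  obtain ⟨a, ha, has⟩ := exists_mem_ne h0 s
  obtain ⟨d, hd, hdr⟩ := exists_mem_ne h3 r
  apply hexagon_of_palette ![a, s, r, d, r, s] a d r s <;>
    simp [Fin.forall_fin_succ, *, Ne.symm]

theorem hexagon_of_mem_two_four_three_five (h0 : 2 ≤ #(L 0)) (h1 : 2 ≤ #(L 1)) (h5 : 3 ≤ #(L 5))
    (hrs : r ≠ s) (hr2 : r ∈ L 2) (hr4 : r ∈ L 4) (hs3 : s ∈ L 3) (hs5 : s ∈ L 5) :
    ListColorableWith (cycleGraph 6) L 4 := by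
  classical
  obtain ⟨a, ha, b, hb, has, hbr, hab⟩ | ⟨t, hts, htr, hs0, -, -, ht1⟩ :=
    exists_distinct_mem_or h0 h1 s r
  · apply hexagon_of_palette ![a, b, r, s, r, s] a b r s <;>
      simp [Fin.forall_fin_succ, *, Ne.symm]
  -- Giving `0` the color `s` frees `t` for `1`; the large list of `5` absorbs the conflict.
  · obtain ⟨f, hf, hfr, hfs⟩ := exists_mem_ne_ne h5 r s
    apply hexagon_of_palette ![s, t, r, s, r, f] f r s t <;>
      simp [Fin.forall_fin_succ, *, Ne.symm]

theorem hexagon_of_mem_zero_four_one_three (h2 : 2 ≤ #(L 2)) (h5 : 2 ≤ #(L 5)) (hrs : r ≠ s)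
    (hr0 : r ∈ L 0) (hr4 : r ∈ L 4) (hs1 : s ∈ L 1) (hs3 : s ∈ L 3) :
    ListColorableWith (cycleGraph 6) L 4 := by
  classical
  obtain ⟨c, hc, hcs⟩ := exists_mem_ne h2 s
  obtain ⟨f, hf, hfr⟩ := exists_mem_ne h5 r
  apply hexagon_of_palette ![r, s, c, s, r, f] c f r s <;>
    simp [Fin.forall_fin_succ, *, Ne.symm]

theorem hexagon_of_mem_zero_four_one_five (hL : ∀ i, 2 ≤ #(L i)) (h5 : 3 ≤ #(L 5)) (hrs : r ≠ s)
    (hr0 : r ∈ L 0) (hr4 : r ∈ L 4) (hs1 : s ∈ L 1) (hs5 : s ∈ L 5) :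
    ListColorableWith (cycleGraph 6) L 4 := by
  classical
  obtain ⟨c, hc, d, hd, hcs, hdr, hcd⟩ | ⟨t, hts, htr, hs2, ht2, hr3, ht3⟩ :=
    exists_distinct_mem_or (hL 2) (hL 3) s r
  · apply hexagon_of_palette ![r, s, c, d, r, s] c d r s <;>
      simp [Fin.forall_fin_succ, *, Ne.symm]
  obtain ⟨b, hb, hbr, hbs⟩ | ⟨hr1, -⟩ := exists_mem_ne_ne_or_mem_mem (hL 1) r s
  · apply hexagon_of_palette ![r, b, s, t, r, s] b r s t <;>
      simp [Fin.forall_fin_succ, *, Ne.symm]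
  obtain ⟨e, he, her, hes⟩ | ⟨-, hs4⟩ := exists_mem_ne_ne_or_mem_mem (hL 4) r s
  · apply hexagon_of_palette ![r, s, t, r, e, s] e r s t <;>
      simp [Fin.forall_fin_succ, *, Ne.symm]
  · exact hexagon_of_mem_two_four_one_three (hL 0) h5 hrs.symm hs2 hs4 hr1 hr3

theorem hexagon_of_mem_two_four (hL : ∀ i, 2 ≤ #(L i)) (h5 : 3 ≤ #(L 5)) (hrs : r ≠ s)
    (hr2 : r ∈ L 2) (hr4 : r ∈ L 4)
    (hs : s ∈ L 1 ∧ s ∈ L 3 ∨ s ∈ L 1 ∧ s ∈ L 5 ∨ s ∈ L 3 ∧ s ∈ L 5) :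
    ListColorableWith (cycleGraph 6) L 4 := by
  rcases hs with ⟨hs1, hs3⟩ | ⟨hs1, hs5⟩ | ⟨hs3, hs5⟩
  · exact hexagon_of_mem_two_four_one_three (hL 0) h5 hrs hr2 hr4 hs1 hs3
  · exact hexagon_of_mem_two_four_one_five (hL 0) (hL 3) hrs hr2 hr4 hs1 hs5
  · exact hexagon_of_mem_two_four_three_five (hL 0) (hL 1) h5 hrs hr2 hr4 hs3 hs5

theorem hexagon_of_mem_zero_four (hL : ∀ i, 2 ≤ #(L i)) (h5 : 3 ≤ #(L 5)) (hrs : r ≠ s)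
    (hr0 : r ∈ L 0) (hr4 : r ∈ L 4)
    (hs : s ∈ L 1 ∧ s ∈ L 3 ∨ s ∈ L 1 ∧ s ∈ L 5 ∨ s ∈ L 3 ∧ s ∈ L 5) :
    ListColorableWith (cycleGraph 6) L 4 := by
  rcases hs with ⟨hs1, hs3⟩ | ⟨hs1, hs5⟩ | ⟨hs3, hs5⟩
  · exact hexagon_of_mem_zero_four_one_three (hL 2) (hL 5) hrs hr0 hr4 hs1 hs3
  · exact hexagon_of_mem_zero_four_one_five hL h5 hrs hr0 hr4 hs1 hs5
  · exact .of_iso (cycleGraphReflection 4)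
      (hexagon_of_mem_zero_four_one_five (fun i => hL (4 - i)) h5 hrs hr4 hr0 hs3 hs5)

theorem hexagon {S : Finset α} (hS : #S ≤ 5) (hLS : ∀ i, L i ⊆ S)
    (hL : ∀ i, 2 ≤ #(L i)) (h5 : 3 ≤ #(L 5)) : ListColorableWith (cycleGraph 6) L 4 := by
  classical
  have hodd : #S + 1 < #(L 1) + #(L 3) + #(L 5) := by linarith [hL 1, hL 3]
  have heven : #S < #(L 0) + #(L 2) + #(L 4) := by linarith [hL 0, hL 2, hL 4]
  obtain ⟨r, hr⟩ := exists_mem_inter_of_card_lt (hLS 0) (hLS 2) (hLS 4) heven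
  by_cases hr135 : r ∈ L 1 ∩ L 3 ∩ L 5
  · simp only [mem_inter] at hr135
    exact hexagon_of_mem_one_three_five (hL 0) (hL 2) (hL 4) hr135.1.1 hr135.1.2 hr135.2
  obtain ⟨s, hsr, hs⟩ := exists_ne_mem_inter_of_card_lt (hLS 1) (hLS 3) (hLS 5) hodd hr135
  simp only [mem_inter] at hr hs
  rcases hr with ⟨hr0, hr2⟩ | ⟨hr0, hr4⟩ | ⟨hr2, hr4⟩
  · have hs' : s ∈ L 3 ∧ s ∈ L 1 ∨ s ∈ L 3 ∧ s ∈ L 5 ∨ s ∈ L 1 ∧ s ∈ L 5 := by tauto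
    exact .of_iso (cycleGraphReflection 4)
      (hexagon_of_mem_two_four (fun i => hL (4 - i)) h5 hsr.symm hr2 hr0 hs')
  · exact hexagon_of_mem_zero_four hL h5 hsr.symm hr0 hr4 hs
  · exact hexagon_of_mem_two_four hL h5 hsr.symm hr2 hr4 hs

end ListColorableWith

theorem wheel6_adj_castSucc {i j : Fin 6} :
    wheel6.Adj i.castSucc j.castSucc ↔ (cycleGraph 6).Adj i j := by
  simp only [wheel6, fromRel_adj]
  decide +revert

theorem ListColorableWith.exists_wheel6_coloring {α : Type*} {L : Fin 7 → Finset α} {n : ℕ}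
    (h : ListColorableWith (cycleGraph 6) (fun i => L i.castSucc) n) (hx : n < #(L 6)) :
    ∃ φ : Fin 7 → α, (∀ v, φ v ∈ L v) ∧ ∀ ⦃u v⦄, wheel6.Adj u v → φ u ≠ φ v := by
  obtain ⟨C, hCL, P, hP, hCP⟩ := h
  obtain ⟨x, hxL, hxP⟩ := exists_mem_notMem_of_card_lt_card (hP.trans_lt hx)
  have hCx (i : Fin 6) : C i ≠ x := ne_of_mem_of_not_mem (hCP i) hxP
  refine ⟨Fin.snoc (α := fun _ => α) C x, fun v => ?_, fun u v huv => ?_⟩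
  · cases v using Fin.lastCases with
    | last => rwa [Fin.snoc_last]
    | cast i => simpa only [Fin.snoc_castSucc] using hCL i
  · cases u using Fin.lastCases with
    | last =>
      cases v using Fin.lastCases with
      | last => exact (wheel6.irrefl huv).elim
      | cast j => simpa only [Fin.snoc_last, Fin.snoc_castSucc] using (hCx j).symm
    | cast i =>
      cases v using Fin.lastCases with
      | last => simpa only [Fin.snoc_last, Fin.snoc_castSucc] using hCx i
      | cast j => simpa only [Fin.snoc_castSucc] using C.valid (wheel6_adj_castSucc.1 huv)

theorem wheel6_list_colorable_general {α : Type*} (L : Fin 7 → Finset α)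
    (S : Finset α) (hS : #S ≤ 5) (hLS : ∀ i : Fin 6, L i.castSucc ⊆ S)
    (ha : 2 ≤ #(L 0)) (hb : 2 ≤ #(L 1)) (hc : 2 ≤ #(L 2))
    (hd : 2 ≤ #(L 3)) (he : 2 ≤ #(L 4)) (hf : 3 ≤ #(L 5)) (hx : 5 ≤ #(L 6)) :
    ∃ φ : Fin 7 → α, (∀ v, φ v ∈ L v) ∧ ∀ ⦃u v⦄, wheel6.Adj u v → φ u ≠ φ v := by
  have hL (i : Fin 6) : 2 ≤ #(L i.castSucc) := by
    fin_cases i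
    exacts [ha, hb, hc, hd, he, (Nat.le_succ 2).trans hf]
  exact (ListColorableWith.hexagon hS hLS hL hf).exists_wheel6_coloring hx

/-- The wheel `W₆` admits a proper list coloring with colors from `{1,…,5}`
(here `Fin 5`) whenever the lists of the five cycle vertices `a,…,e` have size
at least `2`, the list of `f` has size at least `3`, and the hub `x` has all
five colors available. -/
theorem wheel6_list_colorable (L : Fin 7 → Finset (Fin 5))
    (ha : 2 ≤ (L 0).card) (hb : 2 ≤ (L 1).card) (hc : 2 ≤ (L 2).card)
    (hd : 2 ≤ (L 3).card) (he : 2 ≤ (L 4).card) (hf : 3 ≤ (L 5).card)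
    (hx : L 6 = Finset.univ) :
    ∃ φ : Fin 7 → Fin 5, (∀ v, φ v ∈ L v) ∧
      ∀ ⦃u v⦄, wheel6.Adj u v → φ u ≠ φ v := by
  exact wheel6_list_colorable_general L Finset.univ (by simp) (fun _ => Finset.subset_univ _)
    ha hb hc hd he hf (by simp [hx])
end
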